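/- Let d > 2 be an integer and c₀ ∈ (0,1]. There exist constants c, C > 0 depending only on (d, c₀) such that for every admissible kernel J on ℤ^d with constant c₀, every G ∈ 𝒢 with (J,G) satisfying Assumption G, every δ ∈ (0,1/2], every β ≤ min{1−δ, β(δ)}, and every x ∈ ℤ^d: G_β(x) ≤ δ_0(x) + (C/σ_J^d)·(σ_J/(σ_J∨|x|))^{d−2}·exp(−c·|x|/ξ(β)), and F_β(x) ≤ (C/σ_J^d)·(σ_J/(σ_J∨|x|))^{d−2}·exp(−c·|x|/ξ(β)). -/

import Mathlib

open scoped ENNReal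

noncomputable section

namespace Blackbox

/-- Supremum norm of a lattice point. -/
def supNorm {d : ℕ} (x : Fin d → ℤ) : ℝ :=
  ((Finset.univ.sup fun i => (x i).natAbs : ℕ) : ℝ)

/-- Squared Euclidean norm of a lattice point. -/
def sqNorm {d : ℕ} (x : Fin d → ℤ) : ℝ :=
  ∑ i, ((x i : ℝ)) ^ 2

/-- Invariance under coordinate permutations and sign flips of individual coordinates. -/
def IsSymmFun {d : ℕ} {α : Type*} (f : (Fin d → ℤ) → α) : Prop :=
  ∀ (π : Equiv.Perm (Fin d)) (e : Fin d → Bool) (x : Fin d → ℤ),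
    f (fun i => (if e i then -1 else 1) * x (π i)) = f x

/-- First coordinate (dot product with `e₁`). -/
def e1 {d : ℕ} {α : Type*} [Zero α] (y : Fin d → α) : α :=
  if h : 0 < d then y ⟨0, h⟩ else 0

/-- An admissible kernel on `ℤ^d` with constant `c₀`. -/
structure AdmissibleKernel (d : ℕ) (c₀ : ℝ) where
  J : (Fin d → ℤ) → ℝ
  nonneg : ∀ x, 0 ≤ J x
  zero_at_zero : J 0 = 0
  summable : Summable J
  norm_one : ∑' x, J x = 1
  symm : IsSymmFun J
  R : ℝ
  R_ge_one : 1 ≤ R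
  range_le : ∀ x, 0 < J x → supNorm x ≤ R
  range_attained : ∃ x, 0 < J x ∧ supNorm x = R
  summable_sq : Summable fun x => sqNorm x * J x
  sigma_lower : c₀ * R ≤ Real.sqrt (∑' x, sqNorm x * J x)
  J_upper : ∀ x, J x ≤ c₀⁻¹ / R ^ d

/-- `σ_J`, the square root of the variance of the kernel. -/
def AdmissibleKernel.sigma {d : ℕ} {c₀ : ℝ} (K : AdmissibleKernel d c₀) : ℝ :=
  Real.sqrt (∑' x, sqNorm x * K.J x)

/-- A family `G ∈ 𝒢` together with an admissible kernel `J` such that `(J,G)` satisfies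
Assumption G (with error-term family `H`). -/
structure Model (d : ℕ) (c₀ : ℝ) where
  K : AdmissibleKernel d c₀
  G : ℝ → (Fin d → ℤ) → ℝ≥0∞
  βc : ℝ≥0∞
  βc_pos : 0 < βc
  init : ∀ x, G 0 x = if x = 0 then 1 else 0
  G' : ℝ → (Fin d → ℤ) → ℝ
  mono : ∀ (x : Fin d → ℤ) ⦃β₁ β₂ : ℝ⦄, 0 ≤ β₁ → β₁ ≤ β₂ →
    ENNReal.ofReal β₂ ≤ βc → G β₁ x ≤ G β₂ x
  deriv : ∀ (x : Fin d → ℤ) ⦃β : ℝ⦄, 0 ≤ β → ENNReal.ofReal β < βc →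
    HasDerivWithinAt (fun t => (G t x).toReal) (G' β x) (Set.Ici 0) β
  symm : ∀ β, IsSymmFun (G β)
  expDecay : ∀ ⦃β : ℝ⦄, 0 ≤ β → ENNReal.ofReal β < βc →
    ∃ C > (0:ℝ), ∃ c > (0:ℝ), ∀ x, G β x ≤ ENNReal.ofReal (C * Real.exp (-c * supNorm x))
  limit : βc ≠ ⊤ → ∀ x, G βc.toReal x = ⨆ β ∈ Set.Ico (0 : ℝ) βc.toReal, G β x
  I1 : ∀ ⦃β' β : ℝ⦄, 0 ≤ β' → β' ≤ β → ENNReal.ofReal β < βc →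
    ∀ x, G β x ≤ G β' x + ENNReal.ofReal (β - β') *
      ∑' p : (Fin d → ℤ) × (Fin d → ℤ),
        G β' p.1 * ENNReal.ofReal (K.J p.2) * G β (x - p.1 - p.2)
  H : ℝ → (Fin d → ℤ) → ℝ
  H_nonneg : ∀ β x, 0 ≤ H β x
  H_zero : ∀ x, H 0 x = 0
  H_symm : ∀ β x, H β (-x) = H β x
  H_cont : ∀ x, ContinuousOn (fun β => H β x)
    {β : ℝ | 0 ≤ β ∧ ENNReal.ofReal β < βc}
  H_expDecay : ∀ ⦃β : ℝ⦄, 0 ≤ β → ENNReal.ofReal β < βc →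
    ∃ C > (0:ℝ), ∃ c > (0:ℝ), ∀ x, H β x ≤ C * Real.exp (-c * supNorm x)
  I2 : ∀ ⦃β : ℝ⦄, 0 ≤ β → ENNReal.ofReal β < βc → ∀ x,
    (∑' p : (Fin d → ℤ) × (Fin d → ℤ),
      (G β p.1).toReal * (K.J p.2 - H β p.2) * (G β (x - p.1 - p.2)).toReal)
      ≤ G' β x

namespace Model

variable {d : ℕ} {c₀ : ℝ}

def sigma (M : Model d c₀) : ℝ := M.K.sigma

/-- `F_β = J * G_β`. -/
def F (M : Model d c₀) (β : ℝ) (x : Fin d → ℤ) : ℝ≥0∞ :=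
  ∑' y, ENNReal.ofReal (M.K.J y) * M.G β (x - y)

/-- The susceptibility `χ(β)`. -/
def chi (M : Model d c₀) (β : ℝ) : ℝ≥0∞ := ∑' x, M.G β x

/-- `ξ(β)²`. -/
def xiSq (M : Model d c₀) (β : ℝ) : ℝ≥0∞ :=
  (∑' x, ENNReal.ofReal (sqNorm x) * M.F β x) / M.chi β

/-- The correlation length of order two, `ξ(β)`. -/
def xi (M : Model d c₀) (β : ℝ) : ℝ := Real.sqrt (M.xiSq β).toReal

/-- The error term `E(β)`. -/
def E (M : Model d c₀) (β : ℝ) : ℝ≥0∞ :=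
  ⨆ t ∈ Set.Icc (0 : ℝ) β,
    (ENNReal.ofReal (∑' x, M.H t x) +
      ENNReal.ofReal (∑' x, sqNorm x * M.H t x) / M.xiSq t)

/-- `β(δ)`. -/
def betaOf (M : Model d c₀) (δ : ℝ) : ℝ :=
  sSup {β : ℝ | 0 ≤ β ∧ ENNReal.ofReal β < M.βc ∧ M.E β < ENNReal.ofReal δ}

/-- One-step distribution of the effective random walk at parameter `β`. -/
def effStep (M : Model d c₀) (β : ℝ) (y : Fin d → ℤ) : ℝ≥0∞ :=
  M.F β y / M.chi β

/-- `k`-step distribution of the effective random walk at parameter `β`. -/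
def effIter (M : Model d c₀) (β : ℝ) : ℕ → (Fin d → ℤ) → ℝ≥0∞
  | 0 => fun x => if x = 0 then 1 else 0
  | n + 1 => fun x => ∑' y, M.effStep β y * M.effIter β n (x - y)

/-- Moment generating function `M_β(s)` of the first coordinate of one step of the
effective random walk. -/
def Mgf (M : Model d c₀) (β s : ℝ) : ℝ≥0∞ :=
  ∑' y : Fin d → ℤ, M.effStep β y * ENNReal.ofReal (Real.exp (s / M.xi β * ((e1 y : ℤ) : ℝ)))

end Model

end Blackbox
open Blackbox

/-!
By (I.1) with `β' = 0`, `G_β` is dominated by the Green function `∑ₙ βⁿ J^{*n}` of the `J`-walk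
killed at rate `1 - β`. The walk satisfies the heat-kernel bound
`J^{*n}(x) ≤ C R^{-d} n^{-d/2} exp (-|x|² / (8 n R²))` uniformly in `J`: by symmetry the signs of
the coordinates of its steps can be randomized independently, so the Littlewood–Offord inequality
yields the factor `n^{-d/2}`, and Hoeffding's inequality applied to one half of the walk yields the
Gaussian factor. Summing over `n` bounds the Green function, with exponential decay at rate
`√(1 - β) |x| / R`.

It remains to bound `ξ(β)²` below by a multiple of `σ² / (1 - β)`. By (I.2), the susceptibility
grows at least as fast as solutions of `χ' = (1 - δ) χ²`, and the second moment satisfies an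
analogous differential inequality; comparison with the explicit solutions `(1 - (1 - δ) t)⁻¹` and
`(σ²/2) t (1 - (1 - δ) t)⁻²`, together with `χ(β) ≤ (1 - β)⁻¹`, gives the bound. For
`β` near `1` the comparison is made at `2β - 1` instead of `β`, because `E < δ` is known only
strictly below `β(δ)`.
-/

namespace Blackbox

/-! ### Convolution powers and Green functions -/

section Convolution

variable {V : Type*} [AddCommGroup V]

/-- The convolution `f * g` of two nonnegative functions on a discrete abelian group. -/
def conv (f g : V → ℝ≥0∞) (x : V) : ℝ≥0∞ := ∑' y, f y * g (x - y)

lemma conv_mono {f₁ f₂ g₁ g₂ : V → ℝ≥0∞} (hf : f₁ ≤ f₂) (hg : g₁ ≤ g₂) :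
    conv f₁ g₁ ≤ conv f₂ g₂ :=
  fun x => ENNReal.tsum_le_tsum fun y => mul_le_mul' (hf y) (hg (x - y))

lemma conv_add (f g₁ g₂ : V → ℝ≥0∞) : conv f (g₁ + g₂) = conv f g₁ + conv f g₂ := by
  funext x
  simp only [conv, Pi.add_apply, mul_add, ENNReal.tsum_add]

lemma conv_smul (f : V → ℝ≥0∞) (c : ℝ≥0∞) (g : V → ℝ≥0∞) : conv f (c • g) = c • conv f g := by
  funext x
  simp only [conv, Pi.smul_apply, smul_eq_mul, mul_left_comm _ c, ENNReal.tsum_mul_left]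

lemma conv_comm (f g : V → ℝ≥0∞) : conv f g = conv g f := by
  funext x
  simp only [conv]
  rw [← (Equiv.subLeft x).tsum_eq]
  simp only [Equiv.subLeft_apply, sub_sub_cancel, mul_comm]

lemma tsum_conv_mul (f g φ : V → ℝ≥0∞) :
    ∑' x, conv f g x * φ x = ∑' y, ∑' z, f y * g z * φ (y + z) := by
  simp only [conv, ← ENNReal.tsum_mul_right]
  rw [ENNReal.tsum_comm]
  refine tsum_congr fun y => ?_
  rw [← (Equiv.addLeft y).tsum_eq]
  simp only [Equiv.coe_addLeft, add_sub_cancel_left]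

lemma conv_assoc (f g h : V → ℝ≥0∞) : conv (conv f g) h = conv f (conv g h) := by
  funext x
  calc conv (conv f g) h x = ∑' y, ∑' z, f y * g z * h (x - (y + z)) :=
        tsum_conv_mul f g fun y => h (x - y)
    _ = conv f (conv g h) x := by
        simp only [conv, ← ENNReal.tsum_mul_left, mul_assoc, sub_sub]

lemma tsum_prod_eq_conv_conv (f g h : V → ℝ≥0∞) (x : V) :
    ∑' p : V × V, f p.1 * g p.2 * h (x - p.1 - p.2) = conv f (conv g h) x := by
  rw [ENNReal.tsum_prod']
  simp only [conv, mul_assoc, ENNReal.tsum_mul_left]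

lemma tsum_conv (f g : V → ℝ≥0∞) : ∑' x, conv f g x = (∑' x, f x) * ∑' x, g x := by
  simpa only [mul_one, ENNReal.tsum_mul_left, ENNReal.tsum_mul_right]
    using tsum_conv_mul f g fun _ => 1

lemma conv_le_tsum_mul (f : V → ℝ≥0∞) {g : V → ℝ≥0∞} {C : ℝ≥0∞} (hg : ∀ x, g x ≤ C) (x : V) :
    conv f g x ≤ (∑' y, f y) * C := by
  rw [← ENNReal.tsum_mul_right]
  exact ENNReal.tsum_le_tsum fun y => mul_le_mul_right (hg _) _

variable [DecidableEq V]

/-- The unit of convolution: the Kronecker delta at `0`. -/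
def delta (x : V) : ℝ≥0∞ := if x = 0 then 1 else 0

@[simp]
lemma tsum_delta_mul (φ : V → ℝ≥0∞) : ∑' x, delta x * φ x = φ 0 := by
  rw [tsum_eq_single 0 fun x hx => by simp only [delta, if_neg hx, zero_mul]]
  simp only [delta, if_true, one_mul]

lemma delta_conv (f : V → ℝ≥0∞) : conv delta f = f := by
  funext x
  rw [conv, tsum_delta_mul, sub_zero]

lemma conv_delta (f : V → ℝ≥0∞) : conv f delta = f := by
  rw [conv_comm, delta_conv]

/-- The `n`-fold convolution power of `w`; for a probability law `w` it is the law of the `n`-th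
position of the random walk with step distribution `w`. -/
def convPow (w : V → ℝ≥0∞) : ℕ → V → ℝ≥0∞
  | 0 => delta
  | n + 1 => conv w (convPow w n)

lemma convPow_add (w : V → ℝ≥0∞) (m n : ℕ) :
    convPow w (m + n) = conv (convPow w m) (convPow w n) := by
  induction m with
  | zero => rw [Nat.zero_add, convPow, delta_conv]
  | succ m ih => rw [Nat.succ_add, convPow, convPow, ih, conv_assoc]

lemma tsum_convPow_mul_of_mul (w : V → ℝ≥0∞) {χ : V → ℝ≥0∞} (hχ₀ : χ 0 = 1)
    (hχ : ∀ x y, χ (x + y) = χ x * χ y) (n : ℕ) :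
    ∑' x, convPow w n x * χ x = (∑' x, w x * χ x) ^ n := by
  induction n with
  | zero => rw [convPow, tsum_delta_mul, hχ₀, pow_zero]
  | succ n ih =>
    rw [convPow, tsum_conv_mul, pow_succ', ← ih, ← ENNReal.tsum_mul_right]
    refine tsum_congr fun y => ?_
    rw [← ENNReal.tsum_mul_left]
    exact tsum_congr fun z => by rw [hχ]; ring

lemma tsum_convPow (w : V → ℝ≥0∞) (n : ℕ) : ∑' x, convPow w n x = (∑' x, w x) ^ n := by
  simpa only [mul_one] using tsum_convPow_mul_of_mul w (χ := fun _ => 1) rfl (fun _ _ => by simp) n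

lemma tsum_convPow_mul (w φ : V → ℝ≥0∞) (n : ℕ) :
    ∑' x, convPow w n x * φ x = ∑' y : Fin n → V, (∏ j, w (y j)) * φ (∑ j, y j) := by
  induction n generalizing φ with
  | zero => simp only [convPow, tsum_delta_mul, tsum_fintype, Finset.univ_unique,
      Finset.univ_eq_empty, Finset.prod_empty, Finset.sum_empty, one_mul, Finset.sum_singleton]
  | succ n ih =>
    rw [convPow, tsum_conv_mul, ← (Fin.consEquiv fun _ => V).tsum_eq]
    simp only [Fin.consEquiv_apply, Fin.prod_univ_succ, Fin.sum_univ_succ, Fin.cons_zero,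
      Fin.cons_succ]
    rw [ENNReal.tsum_prod']
    refine tsum_congr fun y => ?_
    simp only [mul_assoc, ENNReal.tsum_mul_left, ih fun z => φ (y + z)]

/-- The Green function `∑ₙ tⁿ w^{*n}` of the random walk with step distribution `w`, killed at
each step with probability `1 - t`. -/
def green (w : V → ℝ≥0∞) (t : ℝ≥0∞) (x : V) : ℝ≥0∞ := ∑' n, t ^ n * convPow w n x

lemma conv_green (w : V → ℝ≥0∞) (t : ℝ≥0∞) (x : V) :
    conv w (green w t) x = ∑' n, t ^ n * convPow w (n + 1) x := by
  simp only [conv, green, convPow, ← ENNReal.tsum_mul_left]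
  rw [ENNReal.tsum_comm]
  simp only [mul_left_comm]

lemma green_eq_delta_add (w : V → ℝ≥0∞) (t : ℝ≥0∞) :
    green w t = delta + t • conv w (green w t) := by
  funext x
  rw [green, tsum_eq_zero_add' ENNReal.summable, Pi.add_apply, Pi.smul_apply, conv_green,
    smul_eq_mul, ← ENNReal.tsum_mul_left]
  simp only [pow_zero, one_mul, convPow, pow_succ', mul_assoc]

lemma le_sum_convPow_add {w g : V → ℝ≥0∞} {t : ℝ≥0∞} (h : g ≤ delta + t • conv w g) (N : ℕ) :
    g ≤ ∑ n ∈ Finset.range N, t ^ n • convPow w n + t ^ N • conv (convPow w N) g := by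
  induction N with
  | zero => simp only [Finset.range_zero, Finset.sum_empty, pow_zero, one_smul, convPow,
      delta_conv, zero_add, le_refl]
  | succ N ih =>
    have hstep : conv (convPow w N) g ≤ convPow w N + t • conv (convPow w (N + 1)) g :=
      calc conv (convPow w N) g ≤ conv (convPow w N) (delta + t • conv w g) := conv_mono le_rfl h
        _ = convPow w N + t • conv (convPow w (N + 1)) g := by
          rw [conv_add, conv_delta, conv_smul, ← conv_assoc, conv_comm (convPow w N) w, convPow]
    calc g ≤ ∑ n ∈ Finset.range N, t ^ n • convPow w n + t ^ N • conv (convPow w N) g := ih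
      _ ≤ ∑ n ∈ Finset.range N, t ^ n • convPow w n
            + t ^ N • (convPow w N + t • conv (convPow w (N + 1)) g) := by gcongr
      _ = _ := by rw [Finset.sum_range_succ, smul_add, smul_smul, ← pow_succ, add_assoc]

/-- Iterating the inequality expresses `g` through the partial sums of `green w t` plus a
remainder that tends to `0` because `t < 1`. -/
lemma le_green {w g : V → ℝ≥0∞} (hw : ∑' x, w x = 1) {t C : ℝ≥0∞} (ht : t < 1) (hC : C ≠ ⊤)
    (hg : ∀ x, g x ≤ C) (h : g ≤ delta + t • conv w g) : g ≤ green w t := by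
  intro x
  have hbound (N : ℕ) : g x ≤ green w t x + t ^ N * C := by
    have hN := le_sum_convPow_add h N x
    simp only [Pi.add_apply, Finset.sum_apply, Pi.smul_apply, smul_eq_mul] at hN
    refine hN.trans (add_le_add (ENNReal.sum_le_tsum _) (mul_le_mul_right ?_ _))
    simpa only [tsum_convPow, hw, one_pow, one_mul] using conv_le_tsum_mul (convPow w N) hg x
  have hlim : Filter.Tendsto (fun N => green w t x + t ^ N * C) Filter.atTop
      (nhds (green w t x + 0 * C)) :=
    (ENNReal.Tendsto.mul_const (ENNReal.tendsto_pow_atTop_nhds_zero_of_lt_one ht)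
      (Or.inr hC)).const_add _
  simpa only [zero_mul, add_zero] using ge_of_tendsto' hlim hbound

end Convolution

/-! ### The Littlewood–Offord inequality -/

section LittlewoodOfford

open Finset

lemma centralBinom_sq_mul_le (n : ℕ) : n.centralBinom ^ 2 * (2 * n + 1) ≤ 16 ^ n := by
  induction n with
  | zero => simp
  | succ n ih =>
    have hrec : ((n + 1) * (n + 1).centralBinom) ^ 2 = (2 * (2 * n + 1) * n.centralBinom) ^ 2 := by
      rw [Nat.succ_mul_centralBinom_succ]
    have hfactor : (2 * n + 1) * (2 * n + 3) ≤ 4 * (n + 1) ^ 2 := by nlinarith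
    refine Nat.le_of_mul_le_mul_left (c := (n + 1) ^ 2) ?_ (by positivity)
    calc (n + 1) ^ 2 * ((n + 1).centralBinom ^ 2 * (2 * (n + 1) + 1))
        = ((n + 1) * (n + 1).centralBinom) ^ 2 * (2 * n + 3) := by ring
      _ = 4 * ((2 * n + 1) * (2 * n + 3)) * (n.centralBinom ^ 2 * (2 * n + 1)) := by
          rw [hrec]; ring
      _ ≤ 4 * (4 * (n + 1) ^ 2) * 16 ^ n := by gcongr
      _ = (n + 1) ^ 2 * 16 ^ (n + 1) := by ring

lemma choose_half_sq_mul_le (n : ℕ) : (n.choose (n / 2)) ^ 2 * (n + 1) ≤ 4 ^ n := by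
  rcases Nat.even_or_odd' n with ⟨k, rfl | rfl⟩
  · rw [Nat.mul_div_cancel_left k two_pos, pow_mul]
    exact centralBinom_sq_mul_le k
  · have hcentral : (k + 1).centralBinom = 2 * (2 * k + 1).choose k := by
      rw [Nat.centralBinom, show 2 * (k + 1) = (2 * k + 1) + 1 by ring, Nat.choose_succ_succ,
        Nat.choose_symm_half, ← two_mul]
    have hbound := centralBinom_sq_mul_le (k + 1)
    rw [hcentral, mul_pow, pow_succ 16] at hbound
    rw [show (2 * k + 1) / 2 = k by lia, pow_succ 4, pow_mul, show 4 ^ 2 = 16 by rfl]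
    nlinarith [sq_nonneg ((2 * k + 1).choose k)]

lemma choose_half_le (n : ℕ) : (n.choose (n / 2) : ℝ) ≤ 2 ^ n / √(n + 1) := by
  rw [le_div_iff₀ (by positivity)]
  refine le_of_sq_le_sq ?_ (by positivity)
  rw [mul_pow, Real.sq_sqrt (by positivity), ← pow_mul, mul_comm n 2, pow_mul]
  norm_num
  exact_mod_cast choose_half_sq_mul_le n

/-- The sign encoded by a Boolean, with the convention of `IsSymmFun`: `true` means `-1`. -/
def boolSign (b : Bool) : ℤ := if b then -1 else 1

/-- The signed sum `∑ⱼ ± aⱼ` with signs `ε`. -/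
def signedSum {ι : Type*} [Fintype ι] (ε : ι → Bool) (a : ι → ℝ) : ℝ :=
  ∑ j, boolSign (ε j) * a j

variable {ι : Type*} [Fintype ι]

/-- The indices at which the signs `ε` make the summand of `signedSum ε a` positive. -/
def positiveIndices (ε : ι → Bool) (a : ι → ℝ) : Finset ι := {j | 0 < boolSign (ε j) * a j}

lemma boolSign_mul_eq (b : Bool) (r : ℝ) :
    boolSign b * r = if 0 < boolSign b * r then |r| else -|r| := by
  cases b <;> rcases lt_trichotomy r 0 with h | h | h <;>
    simp [boolSign, h, h.not_gt, abs_of_neg, abs_of_pos]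

lemma positiveIndices_injective {a : ι → ℝ} (ha : ∀ j, a j ≠ 0) :
    Function.Injective fun ε : ι → Bool => positiveIndices ε a := by
  intro ε ε' h
  funext j
  have hj : 0 < boolSign (ε j) * a j ↔ 0 < boolSign (ε' j) * a j := by
    simpa only [positiveIndices, mem_filter, mem_univ, true_and] using Finset.ext_iff.mp h j
  rcases (ha j).lt_or_gt with hneg | hpos <;> cases hε : ε j <;> cases hε' : ε' j <;>
    simp_all [boolSign, not_lt_of_gt]

lemma signedSum_add_le_of_ssubset {a : ι → ℝ} {A : ℝ} (ha : ∀ j, A ≤ |a j|) {ε ε' : ι → Bool}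
    (h : positiveIndices ε a ⊂ positiveIndices ε' a) :
    signedSum ε a + 2 * A ≤ signedSum ε' a := by
  obtain ⟨i, hi', hi⟩ := exists_of_ssubset h
  have hterm (j : ι) : 0 ≤ boolSign (ε' j) * a j - boolSign (ε j) * a j := by
    have hj := @h.1 j
    simp only [positiveIndices, mem_filter, mem_univ, true_and] at hj
    rw [boolSign_mul_eq (ε j), boolSign_mul_eq (ε' j)]
    by_cases hpos : 0 < boolSign (ε j) * a j
    · rw [if_pos hpos, if_pos (hj hpos), sub_self]
    · rw [if_neg hpos]
      split_ifs <;> linarith [abs_nonneg (a j)]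
  have hi_term := single_le_sum (fun j _ => hterm j) (mem_univ i)
  simp only [positiveIndices, mem_filter, mem_univ, true_and] at hi hi'
  rw [boolSign_mul_eq (ε i), boolSign_mul_eq (ε' i), if_pos hi', if_neg hi,
    sum_sub_distrib] at hi_term
  simp only [signedSum]
  linarith [ha i]

variable [DecidableEq ι]

/-- Erdős' argument: the sets of positive summands of the sign choices in question form an
antichain, so Sperner's theorem applies. -/
lemma card_signedSum_mem_Ico_le_choose {a : ι → ℝ} {A : ℝ} (hA : 0 < A) (ha : ∀ j, A ≤ |a j|)
    (y : ℝ) :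
    #{ε : ι → Bool | signedSum ε a ∈ Set.Ico y (y + 2 * A)} ≤
      (Fintype.card ι).choose (Fintype.card ι / 2) := by
  set s : Finset (ι → Bool) := {ε | signedSum ε a ∈ Set.Ico y (y + 2 * A)}
  have hinj : Function.Injective fun ε : ι → Bool => positiveIndices ε a :=
    positiveIndices_injective fun j => abs_pos.mp (hA.trans_le (ha j))
  rw [← card_image_of_injective s hinj]
  refine IsAntichain.sperner ?_
  rintro _ hS _ hT hne hsub
  obtain ⟨ε, hε, rfl⟩ := mem_image.mp hS
  obtain ⟨ε', hε', rfl⟩ := mem_image.mp hT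
  have := signedSum_add_le_of_ssubset ha (hsub.ssubset_of_ne hne)
  exact absurd (mem_filter.mp hε').2.2 (by linarith [(mem_filter.mp hε).2.1])

/-- Conditioning on the signs of the small coefficients shifts the window and leaves a signed sum
of the large coefficients. -/
lemma card_signedSum_mem_Ico_le_mul_choose (a : ι → ℝ) {A : ℝ} (hA : 0 < A) (y : ℝ) :
    #{ε : ι → Bool | signedSum ε a ∈ Set.Ico y (y + 2 * A)} ≤
      (#{j | A ≤ |a j|}).choose (#{j | A ≤ |a j|} / 2) *
        2 ^ (Fintype.card ι - #{j | A ≤ |a j|}) := by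
  let large (j : ι) : Prop := A ≤ |a j|
  rw [← Fintype.card_subtype large, ← Fintype.card_subtype_compl large, ← Fintype.card_bool,
    ← Fintype.card_fun (α := {j // ¬ large j}), ← card_univ (α := {j // ¬ large j} → Bool)]
  refine card_le_mul_card_image_of_maps_to
    (f := fun ε (j : {j // ¬ large j}) => ε j) (fun _ _ => mem_univ _) _ fun η _ => ?_
  refine le_trans (card_le_card_of_injOn (fun ε (j : {j // large j}) => ε j) ?_ ?_)
    (card_signedSum_mem_Ico_le_choose hA (fun j : {j // large j} => j.2)
      (y - signedSum η fun j => a j))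
  · intro ε hε
    obtain ⟨hmem, rfl⟩ := mem_filter.mp (mem_coe.mp hε)
    have hsplit := Fintype.sum_subtype_add_sum_subtype large fun j => (boolSign (ε j) : ℝ) * a j
    simp only [coe_filter, mem_filter, mem_univ, true_and, Set.mem_Ico, Set.mem_ofPred_eq,
      signedSum] at hmem ⊢
    constructor <;> linarith [hmem.1, hmem.2]
  · intro ε hε ε' hε' h
    rw [← (mem_filter.mp (mem_coe.mp hε')).2] at hε
    have hη := (mem_filter.mp (mem_coe.mp hε)).2
    funext j
    by_cases hj : large j
    · exact congrFun h ⟨j, hj⟩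
    · exact congrFun hη ⟨j, hj⟩

lemma card_signedSum_mem_Ico_le (a : ι → ℝ) {A : ℝ} (hA : 0 < A) (y : ℝ) :
    (#{ε : ι → Bool | signedSum ε a ∈ Set.Ico y (y + 2 * A)} : ℝ) ≤
      2 ^ Fintype.card ι / √(#{j | A ≤ |a j|} + 1) := by
  set N := #{j | A ≤ |a j|}
  have hN : N ≤ Fintype.card ι := card_le_univ _
  calc (#{ε : ι → Bool | signedSum ε a ∈ Set.Ico y (y + 2 * A)} : ℝ)
      ≤ N.choose (N / 2) * 2 ^ (Fintype.card ι - N) := by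
        exact_mod_cast card_signedSum_mem_Ico_le_mul_choose a hA y
    _ ≤ 2 ^ N / √(N + 1) * 2 ^ (Fintype.card ι - N) := by gcongr; exact choose_half_le N
    _ = 2 ^ Fintype.card ι / √(N + 1) := by rw [div_mul_eq_mul_div, ← pow_add,
        Nat.add_sub_cancel' hN]

lemma exists_mem_Ico_of_abs_sub_le {A r x s : ℝ} (hA : 0 < A) {k : ℕ} (hk : r < k * A)
    (hs : |x - s| ≤ r) :
    ∃ l < k, s ∈ Set.Ico (x - r + 2 * A * l) (x - r + 2 * A * l + 2 * A) := by
  rw [abs_le] at hs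
  have hquot : 0 ≤ (s - (x - r)) / (2 * A) := div_nonneg (by linarith) (by linarith)
  have hfloor_le := Nat.floor_le hquot
  have hlt_floor := Nat.lt_floor_add_one ((s - (x - r)) / (2 * A))
  rw [le_div_iff₀ (by linarith)] at hfloor_le
  rw [div_lt_iff₀ (by linarith)] at hlt_floor
  refine ⟨⌊(s - (x - r)) / (2 * A)⌋₊, ?_, by linarith, by linarith⟩
  rw [Nat.floor_lt hquot, div_lt_iff₀ (by linarith)]
  linarith

lemma card_abs_sub_signedSum_le (a : ι → ℝ) {A : ℝ} (hA : 0 < A) (x : ℝ) {r : ℝ} {k : ℕ}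
    (hk : r < k * A) :
    (#{ε : ι → Bool | |x - signedSum ε a| ≤ r} : ℝ) ≤
      k * (2 ^ Fintype.card ι / √(#{j | A ≤ |a j|} + 1)) := by
  let window (l : ℕ) : Finset (ι → Bool) :=
    {ε | signedSum ε a ∈ Set.Ico (x - r + 2 * A * l) (x - r + 2 * A * l + 2 * A)}
  have hcover : ({ε | |x - signedSum ε a| ≤ r} : Finset (ι → Bool)) ⊆
      (range k).biUnion window := by
    intro ε hε
    obtain ⟨l, hl, hmem⟩ := exists_mem_Ico_of_abs_sub_le hA hk (mem_filter.mp hε).2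
    exact mem_biUnion.mpr ⟨l, mem_range.mpr hl, mem_filter.mpr ⟨mem_univ ε, hmem⟩⟩
  calc (#{ε : ι → Bool | |x - signedSum ε a| ≤ r} : ℝ) ≤ ∑ l ∈ range k, (#(window l) : ℝ) := by
        exact_mod_cast (card_le_card hcover).trans card_biUnion_le
    _ ≤ ∑ _l ∈ range k, 2 ^ Fintype.card ι / √(#{j | A ≤ |a j|} + 1) :=
        sum_le_sum fun l _ => card_signedSum_mem_Ico_le a hA _
    _ = k * (2 ^ Fintype.card ι / √(#{j | A ≤ |a j|} + 1)) := by
        rw [sum_const, card_range, nsmul_eq_mul]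

end LittlewoodOfford

/-! ### Symmetric functions on `ℤ^d` -/

section Lattice

variable {d : ℕ}

lemma supNorm_eq_norm (x : Fin d → ℤ) : supNorm x = ‖x‖ := by
  rw [supNorm, Pi.norm_def, ← NNReal.coe_natCast, Finset.apply_sup_eq_sup_comp_of_linearOrder _
    Nat.mono_cast Nat.cast_zero]
  simp only [Function.comp_def, NNReal.natCast_natAbs]

lemma sqNorm_nonneg (x : Fin d → ℤ) : 0 ≤ sqNorm x := Finset.sum_nonneg fun _ _ => sq_nonneg _

lemma sqNorm_le (x : Fin d → ℤ) : sqNorm x ≤ d * ‖x‖ ^ 2 := by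
  calc sqNorm x ≤ ∑ _i : Fin d, ‖x‖ ^ 2 := Finset.sum_le_sum fun i _ => by
        rw [← sq_abs, ← Int.norm_eq_abs]
        gcongr
        exact norm_le_pi_norm x i
    _ = d * ‖x‖ ^ 2 := by
        rw [Finset.sum_const, Finset.card_univ, Fintype.card_fin, nsmul_eq_mul]

lemma sqNorm_add_add_sqNorm_neg_add (x y : Fin d → ℤ) :
    sqNorm (x + y) + sqNorm (-x + y) = 2 * (sqNorm x + sqNorm y) := by
  simp only [sqNorm, ← Finset.sum_add_distrib, Finset.mul_sum, Pi.add_apply, Pi.neg_apply]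
  refine Finset.sum_congr rfl fun i _ => ?_
  push_cast
  ring

/-- The coordinatewise sign change that maps `x` to `(± x₁, …, ± x_d)` with signs `e`. -/
def flipSigns (e : Fin d → Bool) (x : Fin d → ℤ) (i : Fin d) : ℤ := boolSign (e i) * x i

lemma flipSigns_involutive (e : Fin d → Bool) : Function.Involutive (flipSigns e) := by
  intro x
  funext i
  cases h : e i <;> simp [flipSigns, boolSign, h]

variable {α : Type*} {f : (Fin d → ℤ) → α}

lemma IsSymmFun.apply_flipSigns (hf : IsSymmFun f) (e : Fin d → Bool) (x : Fin d → ℤ) :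
    f (flipSigns e x) = f x :=
  hf 1 e x

lemma IsSymmFun.apply_comp_perm (hf : IsSymmFun f) (π : Equiv.Perm (Fin d)) (x : Fin d → ℤ) :
    f (x ∘ π) = f x := by
  rw [← hf π (fun _ => false) x]
  simp [Function.comp_def]

lemma IsSymmFun.even (hf : IsSymmFun f) : f.Even := by
  intro x
  rw [← hf.apply_flipSigns (fun _ => true) x]
  congr 1
  funext i
  simp [flipSigns, boolSign]

/-- The second moment `∑ₓ |x|₂² f(x)`. -/
def secondMoment (f : (Fin d → ℤ) → ℝ≥0∞) : ℝ≥0∞ := ∑' x, ENNReal.ofReal (sqNorm x) * f x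

lemma secondMoment_delta : secondMoment (delta : (Fin d → ℤ) → ℝ≥0∞) = 0 := by
  simp only [secondMoment, mul_comm _ (delta _), tsum_delta_mul]
  simp [sqNorm]

/-- By evenness of `f`, the cross terms cancel as in the parallelogram identity. -/
lemma secondMoment_conv {f : (Fin d → ℤ) → ℝ≥0∞} (hf : f.Even) (g : (Fin d → ℤ) → ℝ≥0∞) :
    secondMoment (conv f g) = secondMoment f * ∑' x, g x + (∑' x, f x) * secondMoment g := by
  have hexpand : secondMoment (conv f g) =
      ∑' y, ∑' z, f y * g z * ENNReal.ofReal (sqNorm (y + z)) := by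
    simp only [secondMoment, mul_comm (ENNReal.ofReal _), tsum_conv_mul]
  have hreflect : secondMoment (conv f g) =
      ∑' y, ∑' z, f y * g z * ENNReal.ofReal (sqNorm (-y + z)) := by
    rw [hexpand, ← (Equiv.neg _).tsum_eq]
    simp only [Equiv.neg_apply, hf _]
  refine (ENNReal.mul_right_inj two_ne_zero ENNReal.ofNat_ne_top).mp ?_
  calc 2 * secondMoment (conv f g)
      = ∑' y, ∑' z, f y * g z * ENNReal.ofReal (2 * (sqNorm y + sqNorm z)) := by
        rw [two_mul]
        nth_rw 1 [hexpand]
        rw [hreflect]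
        simp only [← ENNReal.tsum_add, ← mul_add,
          ← ENNReal.ofReal_add (sqNorm_nonneg _) (sqNorm_nonneg _), sqNorm_add_add_sqNorm_neg_add]
    _ = 2 * (secondMoment f * ∑' x, g x + (∑' x, f x) * secondMoment g) := by
        simp only [secondMoment, ENNReal.ofReal_mul two_pos.le, ENNReal.ofReal_ofNat,
          ENNReal.ofReal_add (sqNorm_nonneg _) (sqNorm_nonneg _), ← ENNReal.tsum_mul_right]
        simp only [← ENNReal.tsum_mul_left, ← ENNReal.tsum_add]
        refine tsum_congr fun y => tsum_congr fun z => ?_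
        ring

lemma secondMoment_convPow {w : (Fin d → ℤ) → ℝ≥0∞} (hw : w.Even) (hmass : ∑' x, w x = 1)
    (n : ℕ) : secondMoment (convPow w n) = n * secondMoment w := by
  induction n with
  | zero => rw [convPow, secondMoment_delta, Nat.cast_zero, zero_mul]
  | succ n ih =>
    rw [convPow, secondMoment_conv hw, ih, tsum_convPow, hmass, one_pow, mul_one, one_mul]
    push_cast
    ring

end Lattice

lemma tsum_mul_le_add_mul_tsum_ite {α : Type*} {w f : α → ℝ≥0∞} (hw : ∑' y, w y = 1) {B : ℝ≥0∞}
    (hB : ∀ y, w y ≠ 0 → f y ≤ B) (θ : ℝ≥0∞) :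
    ∑' y, w y * f y ≤ θ + B * ∑' y, w y * if θ ≤ f y then 1 else 0 := by
  calc ∑' y, w y * f y ≤ ∑' y, (w y * θ + B * (w y * if θ ≤ f y then 1 else 0)) := by
        refine ENNReal.tsum_le_tsum fun y => ?_
        rcases eq_or_ne (w y) 0 with hy | hy
        · simp [hy]
        · rw [mul_left_comm, ← mul_add]
          gcongr
          split_ifs with h
          · exact (hB y hy).trans (by simp)
          · exact (not_le.mp h).le.trans (by simp)
    _ = θ + B * ∑' y, w y * if θ ≤ f y then 1 else 0 := by
        rw [ENNReal.tsum_add, ENNReal.tsum_mul_right, hw, one_mul, ENNReal.tsum_mul_left]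

namespace AdmissibleKernel

variable {d : ℕ} {c₀ : ℝ} (K : AdmissibleKernel d c₀)

/-- The kernel `J` as a probability law with values in `ℝ≥0∞`. -/
def law (x : Fin d → ℤ) : ℝ≥0∞ := ENNReal.ofReal (K.J x)

lemma tsum_law : ∑' x, K.law x = 1 := by
  simp only [law]
  rw [← ENNReal.ofReal_tsum_of_nonneg K.nonneg K.summable, K.norm_one, ENNReal.ofReal_one]

lemma law_isSymmFun : IsSymmFun K.law := fun π e x => congrArg ENNReal.ofReal (K.symm π e x)

lemma R_pos : 0 < K.R := one_pos.trans_le K.R_ge_one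

lemma dim_pos (K : AdmissibleKernel d c₀) : 0 < d := by
  obtain ⟨x, -, hx⟩ := K.range_attained
  rcases Nat.eq_zero_or_pos d with rfl | hd
  · rw [supNorm_eq_norm, Subsingleton.elim x 0, norm_zero] at hx
    exact absurd hx K.R_pos.ne
  · exact hd

lemma norm_le_of_law_ne_zero {x : Fin d → ℤ} (h : K.law x ≠ 0) : ‖x‖ ≤ K.R := by
  rw [← supNorm_eq_norm]
  exact K.range_le x (not_le.mp (mt ENNReal.ofReal_eq_zero.mpr h))

lemma sigma_sq : K.sigma ^ 2 = ∑' x, sqNorm x * K.J x :=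
  Real.sq_sqrt (tsum_nonneg fun x => mul_nonneg (sqNorm_nonneg x) (K.nonneg x))

lemma secondMoment_law : secondMoment K.law = ENNReal.ofReal (K.sigma ^ 2) := by
  rw [sigma_sq, ENNReal.ofReal_tsum_of_nonneg
    (fun x => mul_nonneg (sqNorm_nonneg x) (K.nonneg x)) K.summable_sq]
  exact tsum_congr fun x => (ENNReal.ofReal_mul (sqNorm_nonneg x)).symm

lemma sigma_le : K.sigma ≤ √d * K.R := by
  have hsq : K.sigma ^ 2 ≤ d * K.R ^ 2 := by
    refine (ENNReal.ofReal_le_ofReal_iff (by positivity)).mp ?_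
    rw [← secondMoment_law, ← mul_one (ENNReal.ofReal _), ← K.tsum_law, ← ENNReal.tsum_mul_left]
    refine ENNReal.tsum_le_tsum fun x => ?_
    rcases eq_or_ne (K.law x) 0 with hx | hx
    · rw [hx, mul_zero, mul_zero]
    · have := K.norm_le_of_law_ne_zero hx
      gcongr
      exact (sqNorm_le x).trans (by gcongr)
  calc K.sigma ≤ √(d * K.R ^ 2) := Real.le_sqrt_of_sq_le hsq
    _ = √d * K.R := by rw [Real.sqrt_mul (Nat.cast_nonneg d), Real.sqrt_sq K.R_pos.le]

lemma mul_tsum_law_coord_sq (i : Fin d) :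
    d * ∑' y, K.law y * ENNReal.ofReal ((y i : ℝ) ^ 2) = ENNReal.ofReal (K.sigma ^ 2) := by
  have hcoord (k : Fin d) : ∑' y, K.law y * ENNReal.ofReal ((y k : ℝ) ^ 2) =
      ∑' y, K.law y * ENNReal.ofReal ((y i : ℝ) ^ 2) := by
    rw [← ((Equiv.swap i k).arrowCongr (Equiv.refl ℤ)).tsum_eq]
    refine tsum_congr fun y => ?_
    change K.law (y ∘ Equiv.swap i k) * _ = _
    rw [K.law_isSymmFun.apply_comp_perm]
    simp
  rw [← secondMoment_law, secondMoment]
  simp only [sqNorm, ENNReal.ofReal_sum_of_nonneg fun _ _ => sq_nonneg _, mul_comm _ (K.law _),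
    Finset.mul_sum]
  rw [Summable.tsum_finsetSum fun _ _ => ENNReal.summable, Finset.sum_congr rfl fun k _ => hcoord k,
    Finset.sum_const, Finset.card_univ, Fintype.card_fin, nsmul_eq_mul]

/-- A coordinate of a step has mean square `σ²/d` and is at most `R`, so its square exceeds half
of its mean with probability bounded below. -/
lemma le_tsum_law_large_coord (hc₀ : 0 < c₀) (i : Fin d) :
    ENNReal.ofReal (c₀ ^ 2 / (2 * d)) ≤
      ∑' y, K.law y * if c₀ * K.R / √(2 * d) ≤ |(y i : ℝ)| then 1 else 0 := by
  have hd : (0 : ℝ) < d := by exact_mod_cast K.dim_pos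
  have hR := K.R_pos
  set m := c₀ ^ 2 * K.R ^ 2 / (2 * d)
  have hthreshold (y : Fin d → ℤ) : ENNReal.ofReal m ≤ ENNReal.ofReal ((y i : ℝ) ^ 2) ↔
      c₀ * K.R / √(2 * d) ≤ |(y i : ℝ)| := by
    have hm : m = (c₀ * K.R / √(2 * d)) ^ 2 := by
      rw [div_pow, Real.sq_sqrt (by positivity), mul_pow]
    rw [ENNReal.ofReal_le_ofReal_iff (sq_nonneg _), hm, ← sq_abs (y i : ℝ),
      sq_le_sq₀ (by positivity) (abs_nonneg _)]
  have hmarkov := tsum_mul_le_add_mul_tsum_ite (f := fun y => ENNReal.ofReal ((y i : ℝ) ^ 2))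
    K.tsum_law (B := ENNReal.ofReal (K.R ^ 2)) (fun y hy => ENNReal.ofReal_le_ofReal (by
      rw [← sq_abs, ← Int.norm_eq_abs]
      gcongr
      exact (norm_le_pi_norm y i).trans (K.norm_le_of_law_ne_zero hy))) (ENNReal.ofReal m)
  simp only [hthreshold] at hmarkov
  set P := ∑' y, K.law y * if c₀ * K.R / √(2 * d) ≤ |(y i : ℝ)| then 1 else 0
  have hmean : ENNReal.ofReal (d * (2 * m)) ≤
      d * (ENNReal.ofReal m + ENNReal.ofReal (K.R ^ 2) * P) := by
    refine le_trans ?_ (mul_le_mul_right hmarkov _)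
    rw [mul_tsum_law_coord_sq]
    refine ENNReal.ofReal_le_ofReal ?_
    calc d * (2 * m) = (c₀ * K.R) ^ 2 := by simp only [m]; field_simp
      _ ≤ K.sigma ^ 2 := pow_le_pow_left₀ (by positivity) K.sigma_lower 2
  rw [ENNReal.ofReal_mul hd.le, ENNReal.ofReal_natCast,
    ENNReal.mul_le_mul_iff_right (by exact_mod_cast hd.ne') (ENNReal.natCast_ne_top d), two_mul,
    ENNReal.ofReal_add (by positivity) (by positivity),
    ENNReal.add_le_add_iff_left ENNReal.ofReal_ne_top,
    show m = K.R ^ 2 * (c₀ ^ 2 / (2 * d)) by simp only [m]; ring,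
    ENNReal.ofReal_mul (by positivity)] at hmean
  exact (ENNReal.mul_le_mul_iff_right (ENNReal.ofReal_pos.mpr (by positivity)).ne'
    ENNReal.ofReal_ne_top).mp hmean

end AdmissibleKernel

/-! ### Anticoncentration of the random walk -/

section Expectation

variable {V : Type*} {n : ℕ}

lemma tsum_fin_prod (f : V → ℝ≥0∞) : ∑' y : Fin n → V, ∏ j, f (y j) = (∑' x, f x) ^ n := by
  induction n with
  | zero => simp
  | succ n ih =>
    rw [← (Fin.consEquiv fun _ => V).tsum_eq, ENNReal.tsum_prod']
    simp only [Fin.consEquiv_apply, Fin.prod_univ_succ, Fin.cons_zero, Fin.cons_succ,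
      ENNReal.tsum_mul_left, ENNReal.tsum_mul_right, ih, pow_succ']

/-- The expectation of `φ (Y₁, …, Yₙ)` for independent `Yⱼ` with law `w`. -/
def iidExp (w : V → ℝ≥0∞) (φ : (Fin n → V) → ℝ≥0∞) : ℝ≥0∞ := ∑' y, (∏ j, w (y j)) * φ y

variable (w : V → ℝ≥0∞)

lemma iidExp_mono {φ ψ : (Fin n → V) → ℝ≥0∞} (h : φ ≤ ψ) : iidExp w φ ≤ iidExp w ψ :=
  ENNReal.tsum_le_tsum fun y => mul_le_mul_right (h y) _

lemma iidExp_const_mul (c : ℝ≥0∞) (φ : (Fin n → V) → ℝ≥0∞) :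
    iidExp w (fun y => c * φ y) = c * iidExp w φ := by
  simp only [iidExp, mul_left_comm _ c, ENNReal.tsum_mul_left]

lemma iidExp_add (φ ψ : (Fin n → V) → ℝ≥0∞) :
    iidExp w (fun y => φ y + ψ y) = iidExp w φ + iidExp w ψ := by
  simp only [iidExp, mul_add, ENNReal.tsum_add]

lemma iidExp_sum {ι : Type*} (s : Finset ι) (φ : ι → (Fin n → V) → ℝ≥0∞) :
    iidExp w (fun y => ∑ i ∈ s, φ i y) = ∑ i ∈ s, iidExp w (φ i) := by
  simp only [iidExp, Finset.mul_sum]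
  exact Summable.tsum_finsetSum fun _ _ => ENNReal.summable

lemma iidExp_prod (f : V → ℝ≥0∞) :
    iidExp w (fun y : Fin n → V => ∏ j, f (y j)) = (∑' x, w x * f x) ^ n := by
  simp only [iidExp, ← Finset.prod_mul_distrib]
  exact tsum_fin_prod fun x => w x * f x

variable {w}

lemma iidExp_const (hw : ∑' x, w x = 1) (c : ℝ≥0∞) :
    iidExp w (fun _ : Fin n → V => c) = c := by
  have hone := iidExp_prod w (n := n) fun _ => 1
  simp only [Finset.prod_const_one, mul_one, hw, one_pow] at hone
  simpa only [mul_one, hone] using iidExp_const_mul w c fun _ : Fin n → V => 1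

lemma iidExp_comp_flipSigns {d : ℕ} {w : (Fin d → ℤ) → ℝ≥0∞} (hw : IsSymmFun w)
    (e : Fin n → Fin d → Bool) (φ : (Fin n → Fin d → ℤ) → ℝ≥0∞) :
    iidExp w (fun y => φ fun j => flipSigns (e j) (y j)) = iidExp w φ := by
  simp only [iidExp]
  rw [← (Equiv.piCongrRight fun j => (flipSigns_involutive (e j)).toPerm).tsum_eq
    fun y => (∏ j, w (y j)) * φ y]
  simp only [Equiv.piCongrRight_apply, Pi.map_apply, Function.Involutive.coe_toPerm,
    hw.apply_flipSigns]
  rfl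

end Expectation

section Concentration

open Finset

lemma exp_neg_le_sqrt_div_sqrt_pow (d : ℕ) {y : ℝ} (hy : 0 < y) :
    Real.exp (-y) ≤ (√d / √y) ^ d := by
  rcases Nat.eq_zero_or_pos d with rfl | hd
  · simpa using hy.le
  have hd : (0 : ℝ) < d := by exact_mod_cast hd
  have hsqrt : √(y / d) ≤ Real.exp (y / d) := by
    refine (Real.sqrt_le_left (Real.exp_pos _).le).mpr ?_
    nlinarith [Real.add_one_le_exp (y / d), div_pos hy hd]
  calc Real.exp (-y) = (Real.exp (y / d) ^ d)⁻¹ := by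
        rw [← Real.exp_nat_mul, mul_div_cancel₀ _ hd.ne', Real.exp_neg]
    _ ≤ (√(y / d) ^ d)⁻¹ := by gcongr
    _ = (√d / √y) ^ d := by rw [Real.sqrt_div hy.le, ← inv_pow, inv_div]

lemma inv_sqrt_pow_add_exp_mul_le (d : ℕ) {p : ℝ} {n : ℕ} (hp : 0 < p) (hn : 0 < n) :
    1 / √(p / 4 * n) ^ d + Real.exp (p / 4 * n) * Real.exp (-(p / 2)) ^ n ≤
      (1 + √d ^ d) / √(p / 4) ^ d / √n ^ d := by
  have hexp : Real.exp (p / 4 * n) * Real.exp (-(p / 2)) ^ n = Real.exp (-(p / 4 * n)) := by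
    rw [← Real.exp_nat_mul, ← Real.exp_add]
    ring_nf
  rw [hexp, div_div, ← mul_pow, ← Real.sqrt_mul (by positivity), add_div, ← div_pow]
  gcongr
  exact exp_neg_le_sqrt_div_sqrt_pow d (by positivity)

lemma exp_neg_nat_le_half_pow (N : ℕ) : Real.exp (-N) ≤ (1 / 2) ^ N := by
  rw [Real.exp_neg, ← mul_one (N : ℝ), Real.exp_nat_mul, one_div, inv_pow]
  gcongr
  linarith [Real.add_one_le_exp (1 : ℝ)]

/-- The first term covers the case `s ≤ N`, the second the case `N < s`. -/
lemma inv_sqrt_succ_pow_le (d N : ℕ) {s : ℝ} (hs : 0 < s) :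
    1 / √(N + 1) ^ d ≤ 1 / √s ^ d + Real.exp s * (1 / 2) ^ N := by
  rcases le_or_gt s N with h | h
  · calc 1 / √(N + 1) ^ d ≤ 1 / √s ^ d := by gcongr; linarith
      _ ≤ 1 / √s ^ d + Real.exp s * (1 / 2) ^ N := le_add_of_nonneg_right (by positivity)
  · have hsqrt : 1 ≤ √((N : ℝ) + 1) := Real.one_le_sqrt.mpr (by linarith [N.cast_nonneg (α := ℝ)])
    calc 1 / √(N + 1) ^ d ≤ 1 := by
          rw [one_div]
          exact inv_le_one_of_one_le₀ (one_le_pow₀ hsqrt)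
      _ ≤ Real.exp (s - N) := Real.one_le_exp (by linarith)
      _ = Real.exp s * Real.exp (-N) := by rw [← Real.exp_add, sub_eq_add_neg]
      _ ≤ Real.exp s * (1 / 2) ^ N := by gcongr; exact exp_neg_nat_le_half_pow N
      _ ≤ 1 / √s ^ d + Real.exp s * (1 / 2) ^ N := le_add_of_nonneg_left (by positivity)

lemma prod_le_sum_pow_card {ι : Type*} [Fintype ι] [Nonempty ι] (f : ι → ℝ≥0∞) :
    ∏ i, f i ≤ ∑ i, f i ^ Fintype.card ι := by
  obtain ⟨i, hi⟩ := Finite.exists_max f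
  calc ∏ j, f j ≤ ∏ _j : ι, f i := prod_le_prod' fun j _ => hi j
    _ = f i ^ Fintype.card ι := by rw [prod_const, card_univ]
    _ ≤ ∑ i, f i ^ Fintype.card ι :=
        single_le_sum (f := fun i => f i ^ Fintype.card ι) (fun _ _ => zero_le)
          (mem_univ i)

variable {V : Type*} {w : V → ℝ≥0∞} {q : V → Prop} [DecidablePred q] {p : ℝ} {n : ℕ}

lemma tsum_mul_half_le_exp (hw : ∑' y, w y = 1)
    (hp : ENNReal.ofReal p ≤ ∑' y, w y * if q y then 1 else 0) :
    ∑' y, w y * (if q y then 2⁻¹ else 1) ≤ ENNReal.ofReal (Real.exp (-(p / 2))) := by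
  have htotal : ∑' y, w y * (if q y then 2⁻¹ else 1) +
      2⁻¹ * ∑' y, w y * (if q y then 1 else 0) = 1 := by
    rw [← ENNReal.tsum_mul_left, ← ENNReal.tsum_add]
    refine (tsum_congr fun y => ?_).trans hw
    split_ifs
    · rw [mul_one, mul_comm 2⁻¹, ← mul_add, ENNReal.inv_two_add_inv_two, mul_one]
    · rw [mul_one, mul_zero, mul_zero, add_zero]
  have hhalf : ENNReal.ofReal (p / 2) ≤ 2⁻¹ * ∑' y, w y * (if q y then 1 else 0) := by
    rw [div_eq_inv_mul, ENNReal.ofReal_mul (by norm_num), ENNReal.ofReal_inv_of_pos two_pos,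
      ENNReal.ofReal_ofNat]
    gcongr
  calc ∑' y, w y * (if q y then 2⁻¹ else 1) ≤ 1 - ENNReal.ofReal (p / 2) :=
        ENNReal.le_sub_of_add_le_right ENNReal.ofReal_ne_top
          ((add_le_add_right hhalf _).trans_eq htotal)
    _ ≤ ENNReal.ofReal (1 - p / 2) := by
        rw [← ENNReal.ofReal_one]
        exact tsub_le_iff_right.mpr (by
          simpa using ENNReal.ofReal_add_le (p := 1 - p / 2) (q := p / 2))
    _ ≤ ENNReal.ofReal (Real.exp (-(p / 2))) :=
        ENNReal.ofReal_le_ofReal (by linarith [Real.add_one_le_exp (-(p / 2))])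

lemma prod_ite_half_eq (y : Fin n → V) :
    ∏ j, (if q (y j) then 2⁻¹ else 1 : ℝ≥0∞) =
      ENNReal.ofReal ((1 / 2) ^ #{j | q (y j)}) := by
  rw [prod_ite, prod_const, prod_const_one, mul_one,
    ENNReal.ofReal_pow (by norm_num), one_div, ENNReal.ofReal_inv_of_pos two_pos,
    ENNReal.ofReal_ofNat]

/-- The number of `j` with `q (Yⱼ)` is at least `pn/4` up to an event of exponentially small
probability. -/
lemma iidExp_inv_sqrt_card_pow_le (d : ℕ) (hw : ∑' y, w y = 1) (hp₀ : 0 < p)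
    (hp : ENNReal.ofReal p ≤ ∑' y, w y * if q y then 1 else 0) (hn : 0 < n) :
    iidExp w (fun y : Fin n → V =>
        ENNReal.ofReal (1 / √(#{j | q (y j)} + 1) ^ d)) ≤
      ENNReal.ofReal ((1 + √d ^ d) / √(p / 4) ^ d / √n ^ d) := by
  set s := p / 4 * n
  have hs : 0 < s := by positivity
  have hpointwise (y : Fin n → V) :
      ENNReal.ofReal (1 / √(#{j | q (y j)} + 1) ^ d) ≤
        ENNReal.ofReal (1 / √s ^ d) +
          ENNReal.ofReal (Real.exp s) * ∏ j, (if q (y j) then 2⁻¹ else 1) := by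
    rw [prod_ite_half_eq, ← ENNReal.ofReal_mul (Real.exp_pos s).le,
      ← ENNReal.ofReal_add (by positivity) (by positivity)]
    exact ENNReal.ofReal_le_ofReal (inv_sqrt_succ_pow_le d _ hs)
  calc iidExp w (fun y : Fin n → V =>
        ENNReal.ofReal (1 / √(#{j | q (y j)} + 1) ^ d))
      ≤ ENNReal.ofReal (1 / √s ^ d) +
          ENNReal.ofReal (Real.exp s) * (∑' y, w y * if q y then 2⁻¹ else 1) ^ n := by
        refine (iidExp_mono w hpointwise).trans_eq ?_
        rw [iidExp_add, iidExp_const hw, iidExp_const_mul,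
          iidExp_prod w (fun x => if q x then 2⁻¹ else 1)]
    _ ≤ ENNReal.ofReal (1 / √s ^ d) +
          ENNReal.ofReal (Real.exp s) * ENNReal.ofReal (Real.exp (-(p / 2))) ^ n := by
        gcongr
        exact tsum_mul_half_le_exp hw hp
    _ = ENNReal.ofReal (1 / √s ^ d + Real.exp s * Real.exp (-(p / 2)) ^ n) := by
        rw [← ENNReal.ofReal_pow (Real.exp_pos _).le, ← ENNReal.ofReal_mul (Real.exp_pos _).le,
          ← ENNReal.ofReal_add (by positivity) (by positivity)]
    _ ≤ ENNReal.ofReal ((1 + √d ^ d) / √(p / 4) ^ d / √n ^ d) :=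
        ENNReal.ofReal_le_ofReal (inv_sqrt_pow_add_exp_mul_le d hp₀ hn)

end Concentration

section Anticoncentration

open Finset

variable {d n : ℕ} {A r : ℝ} {k : ℕ}

/-- The signs of the different coordinates decouple, so the Littlewood–Offord bound applies in
each coordinate separately. -/
lemma sum_ite_norm_sub_flipSigns_le (hA : 0 < A) (hk : r < k * A) (x : Fin d → ℤ)
    (y : Fin n → Fin d → ℤ) :
    ∑ e : Fin d → Fin n → Bool,
        (if ‖x - ∑ j, flipSigns (fun i => e i j) (y j)‖ ≤ r then 1 else 0 : ℝ≥0∞) ≤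
      ((2 : ℝ≥0∞) ^ n) ^ d *
        ∏ i, ENNReal.ofReal
          (k / √(#{j | A ≤ |(y j i : ℝ)|} + 1)) := by
  have hcoord (e : Fin d → Fin n → Bool) :
      (if ‖x - ∑ j, flipSigns (fun i => e i j) (y j)‖ ≤ r then 1 else 0 : ℝ≥0∞) ≤
        ∏ i, if |(x i : ℝ) - signedSum (e i) fun j => y j i| ≤ r then 1 else 0 := by
    split_ifs with h
    · refine (prod_eq_one fun i _ => if_pos ?_).ge
      refine (norm_le_pi_norm (x - ∑ j, flipSigns (fun i => e i j) (y j)) i).trans h |>.trans_eq' ?_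
      rw [Int.norm_eq_abs]
      simp [signedSum, flipSigns]
    · exact zero_le
  have hLO (i : Fin d) :
      (∑ ε : Fin n → Bool,
        if |(x i : ℝ) - signedSum ε fun j => y j i| ≤ r then 1 else 0 : ℝ≥0∞) ≤
      2 ^ n * ENNReal.ofReal (k / √(#{j | A ≤ |(y j i : ℝ)|} + 1)) := by
    have h := card_abs_sub_signedSum_le (fun j => (y j i : ℝ)) hA (x i) hk
    rw [Fintype.card_fin, mul_div_left_comm] at h
    rw [sum_boole, ← ENNReal.ofReal_natCast, ← ENNReal.ofReal_ofNat,
      ← ENNReal.ofReal_pow two_pos.le, ← ENNReal.ofReal_mul (by positivity)]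
    exact ENNReal.ofReal_le_ofReal h
  refine (sum_le_sum fun e _ => hcoord e).trans ?_
  rw [← Fintype.prod_sum fun i ε =>
    if |(x i : ℝ) - signedSum ε fun j => y j i| ≤ r then (1 : ℝ≥0∞) else 0]
  refine (prod_le_prod' fun i _ => hLO i).trans_eq ?_
  rw [prod_mul_distrib, prod_const, card_univ, Fintype.card_fin]

lemma iidExp_ite_norm_sub_sum_le_iidExp_prod {w : (Fin d → ℤ) → ℝ≥0∞} (hsymm : IsSymmFun w)
    (hA : 0 < A) (hk : r < k * A) (x : Fin d → ℤ) :
    iidExp w (fun y : Fin n → Fin d → ℤ => if ‖x - ∑ j, y j‖ ≤ r then 1 else 0) ≤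
      iidExp w fun y : Fin n → Fin d → ℤ => ∏ i, ENNReal.ofReal
        (k / √(#{j | A ≤ |(y j i : ℝ)|} + 1)) := by
  have haverage := iidExp_mono w (sum_ite_norm_sub_flipSigns_le (n := n) hA hk x)
  rw [iidExp_sum, iidExp_const_mul, sum_congr rfl fun e _ =>
    iidExp_comp_flipSigns hsymm (fun j i => e i j) fun y => if ‖x - ∑ j, y j‖ ≤ r then 1 else 0,
    sum_const, card_univ, Fintype.card_fun, Fintype.card_fun, Fintype.card_bool,
    Fintype.card_fin, Fintype.card_fin, nsmul_eq_mul] at haverage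
  push_cast at haverage
  exact (ENNReal.mul_le_mul_iff_right (by positivity) (by finiteness)).mp haverage

lemma iidExp_ite_norm_sub_sum_le [NeZero d] {w : (Fin d → ℤ) → ℝ≥0∞} (hsymm : IsSymmFun w)
    (hw : ∑' y, w y = 1) (hA : 0 < A) (hk : r < k * A) {p : ℝ} (hp₀ : 0 < p)
    (hp : ∀ i : Fin d, ENNReal.ofReal p ≤ ∑' y, w y * if A ≤ |(y i : ℝ)| then 1 else 0)
    (hn : 0 < n) (x : Fin d → ℤ) :
    iidExp w (fun y : Fin n → Fin d → ℤ => if ‖x - ∑ j, y j‖ ≤ r then 1 else 0) ≤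
      ENNReal.ofReal (d * (k ^ d * ((1 + √d ^ d) / √(p / 4) ^ d)) / √n ^ d) := by
  have hpow (y : Fin n → Fin d → ℤ) (i : Fin d) :
      ENNReal.ofReal (k / √(#{j | A ≤ |(y j i : ℝ)|} + 1)) ^ d =
        ENNReal.ofReal (k ^ d) * ENNReal.ofReal
          (1 / √(#{j | A ≤ |(y j i : ℝ)|} + 1) ^ d) := by
    rw [← ENNReal.ofReal_pow (by positivity), ← ENNReal.ofReal_mul (by positivity), div_pow,
      mul_one_div]
  calc iidExp w (fun y : Fin n → Fin d → ℤ => if ‖x - ∑ j, y j‖ ≤ r then 1 else 0)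
      ≤ iidExp w fun y : Fin n → Fin d → ℤ => ∏ i, ENNReal.ofReal
          (k / √(#{j | A ≤ |(y j i : ℝ)|} + 1)) :=
        iidExp_ite_norm_sub_sum_le_iidExp_prod hsymm hA hk x
    _ ≤ ∑ i : Fin d, ENNReal.ofReal (k ^ d) * iidExp w fun y : Fin n → Fin d → ℤ => ENNReal.ofReal
          (1 / √(#{j | A ≤ |(y j i : ℝ)|} + 1) ^ d) := by
        refine (iidExp_mono w fun y => prod_le_sum_pow_card _).trans_eq ?_
        simp only [Fintype.card_fin, hpow, iidExp_sum, iidExp_const_mul]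
    _ ≤ ∑ _i : Fin d, ENNReal.ofReal (k ^ d) *
          ENNReal.ofReal ((1 + √d ^ d) / √(p / 4) ^ d / √n ^ d) := by
        refine sum_le_sum fun i _ => mul_le_mul_right ?_ _
        exact iidExp_inv_sqrt_card_pow_le d (q := fun z : Fin d → ℤ => A ≤ |(z i : ℝ)|) hw hp₀
          (hp i) hn
    _ = ENNReal.ofReal (d * (k ^ d * ((1 + √d ^ d) / √(p / 4) ^ d)) / √n ^ d) := by
        rw [sum_const, card_univ, Fintype.card_fin, nsmul_eq_mul,
          ← ENNReal.ofReal_natCast, ← ENNReal.ofReal_mul (by positivity),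
          ← ENNReal.ofReal_mul (Nat.cast_nonneg d), mul_div_assoc, mul_div_assoc]

end Anticoncentration

/-! ### Heat kernel bounds -/

section Hoeffding

variable {V : Type*} [AddCommGroup V] {w : V → ℝ≥0∞} {R : ℝ}

lemma tsum_mul_exp_le (heven : w.Even) (hw : ∑' x, w x = 1) (f : V →+ ℝ)
    (hf : ∀ x, w x ≠ 0 → |f x| ≤ R) (s : ℝ) :
    ∑' x, w x * ENNReal.ofReal (Real.exp (s * f x)) ≤
      ENNReal.ofReal (Real.exp (s ^ 2 * R ^ 2 / 2)) := by
  have hreflect : ∑' x, w x * ENNReal.ofReal (Real.exp (s * f x)) =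
      ∑' x, w x * ENNReal.ofReal (Real.exp (-(s * f x))) := by
    rw [← (Equiv.neg V).tsum_eq]
    simp only [Equiv.neg_apply, heven _, map_neg, mul_neg]
  refine (ENNReal.mul_le_mul_iff_right two_ne_zero ENNReal.ofNat_ne_top).mp ?_
  calc 2 * ∑' x, w x * ENNReal.ofReal (Real.exp (s * f x))
      = ∑' x, w x * ENNReal.ofReal (2 * Real.cosh (s * f x)) := by
        rw [two_mul]
        nth_rw 2 [hreflect]
        rw [← ENNReal.tsum_add]
        refine tsum_congr fun x => ?_
        rw [← mul_add, ← ENNReal.ofReal_add (Real.exp_pos _).le (Real.exp_pos _).le,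
          Real.cosh_eq, mul_div_cancel₀ _ two_ne_zero]
    _ ≤ ∑' x, w x * ENNReal.ofReal (2 * Real.exp (s ^ 2 * R ^ 2 / 2)) := by
        refine ENNReal.tsum_le_tsum fun x => ?_
        rcases eq_or_ne (w x) 0 with hx | hx
        · rw [hx, zero_mul, zero_mul]
        · gcongr
          refine (Real.cosh_le_exp_half_sq _).trans ?_
          rw [mul_pow, ← sq_abs (f x)]
          gcongr
          exact hf x hx
    _ = 2 * ENNReal.ofReal (Real.exp (s ^ 2 * R ^ 2 / 2)) := by
        rw [ENNReal.tsum_mul_right, hw, one_mul, ENNReal.ofReal_mul two_pos.le,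
          ENNReal.ofReal_ofNat]

variable [DecidableEq V]

lemma tsum_convPow_mul_ite_le_apply_le (heven : w.Even) (hw : ∑' x, w x = 1) (f : V →+ ℝ)
    (hf : ∀ x, w x ≠ 0 → |f x| ≤ R) (hR : 0 < R) {n : ℕ} (hn : 0 < n) {r : ℝ} (hr : 0 ≤ r) :
    ∑' x, convPow w n x * (if r ≤ f x then 1 else 0) ≤
      ENNReal.ofReal (Real.exp (-(r ^ 2 / (2 * n * R ^ 2)))) := by
  set s := r / (n * R ^ 2) with hs
  have hmarkov (x : V) : (if r ≤ f x then 1 else 0 : ℝ≥0∞) ≤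
      ENNReal.ofReal (Real.exp (s * f x)) * ENNReal.ofReal (Real.exp (-(s * r))) := by
    split_ifs with h
    · rw [← ENNReal.ofReal_mul (Real.exp_pos _).le, ← Real.exp_add, ENNReal.one_le_ofReal]
      refine Real.one_le_exp ?_
      rw [← sub_eq_add_neg, ← mul_sub]
      exact mul_nonneg (by positivity) (sub_nonneg.mpr h)
    · exact zero_le
  calc ∑' x, convPow w n x * (if r ≤ f x then 1 else 0)
      ≤ (∑' x, convPow w n x * ENNReal.ofReal (Real.exp (s * f x))) *
          ENNReal.ofReal (Real.exp (-(s * r))) := by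
        rw [← ENNReal.tsum_mul_right]
        refine ENNReal.tsum_le_tsum fun x => ?_
        rw [mul_assoc]
        gcongr
        exact hmarkov x
    _ ≤ ENNReal.ofReal (Real.exp (s ^ 2 * R ^ 2 / 2)) ^ n *
          ENNReal.ofReal (Real.exp (-(s * r))) := by
        rw [tsum_convPow_mul_of_mul w (by simp) fun x y => by
          rw [map_add, mul_add, Real.exp_add, ENNReal.ofReal_mul (Real.exp_pos _).le]]
        gcongr
        exact tsum_mul_exp_le heven hw f hf s
    _ = ENNReal.ofReal (Real.exp (-(r ^ 2 / (2 * n * R ^ 2)))) := by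
        rw [← ENNReal.ofReal_pow (Real.exp_pos _).le, ← ENNReal.ofReal_mul (by positivity),
          ← Real.exp_nat_mul, ← Real.exp_add]
        congr 2
        rw [hs]
        field_simp
        ring

lemma tsum_convPow_mul_ite_le_abs_le (heven : w.Even) (hw : ∑' x, w x = 1) (f : V →+ ℝ)
    (hf : ∀ x, w x ≠ 0 → |f x| ≤ R) (hR : 0 < R) {n : ℕ} (hn : 0 < n) {r : ℝ} (hr : 0 ≤ r) :
    ∑' x, convPow w n x * (if r ≤ |f x| then 1 else 0) ≤
      ENNReal.ofReal (2 * Real.exp (-(r ^ 2 / (2 * n * R ^ 2)))) := by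
  have hunion (x : V) : (if r ≤ |f x| then 1 else 0 : ℝ≥0∞) ≤
      (if r ≤ f x then 1 else 0) + if r ≤ (-f) x then 1 else 0 := by
    simp only [AddMonoidHom.neg_apply, le_abs]
    split_ifs <;> simp_all
  calc ∑' x, convPow w n x * (if r ≤ |f x| then 1 else 0)
      ≤ ∑' x, convPow w n x * (if r ≤ f x then 1 else 0) +
          ∑' x, convPow w n x * (if r ≤ (-f) x then 1 else 0) := by
        rw [← ENNReal.tsum_add]
        refine ENNReal.tsum_le_tsum fun x => ?_
        rw [← mul_add]
        gcongr
        exact hunion x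
    _ ≤ ENNReal.ofReal (Real.exp (-(r ^ 2 / (2 * n * R ^ 2)))) +
          ENNReal.ofReal (Real.exp (-(r ^ 2 / (2 * n * R ^ 2)))) :=
        add_le_add (tsum_convPow_mul_ite_le_apply_le heven hw f hf hR hn hr)
          (tsum_convPow_mul_ite_le_apply_le heven hw (-f) (fun x hx => by
            simpa only [AddMonoidHom.neg_apply, abs_neg] using hf x hx) hR hn hr)
    _ = ENNReal.ofReal (2 * Real.exp (-(r ^ 2 / (2 * n * R ^ 2)))) := by
        rw [← two_mul, ENNReal.ofReal_mul two_pos.le, ENNReal.ofReal_ofNat]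

end Hoeffding

/-- If `y + z = x` then one of `y`, `z` has norm at least `‖x‖ / 2`. -/
lemma conv_le_add_of_two_mul_le_norm {V : Type*} [SeminormedAddCommGroup V] {f g : V → ℝ≥0∞}
    {A B : ℝ≥0∞} (hf : ∀ x, f x ≤ A) (hg : ∀ x, g x ≤ B) {r : ℝ} {x : V} (hr : 2 * r ≤ ‖x‖) :
    conv f g x ≤ B * ∑' z, f z * (if r ≤ ‖z‖ then 1 else 0) +
      A * ∑' z, g z * (if r ≤ ‖z‖ then 1 else 0) := by
  rw [← (Equiv.subLeft x).tsum_eq fun z => g z * (if r ≤ ‖z‖ then 1 else 0)]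
  simp only [conv, Equiv.subLeft_apply, ← ENNReal.tsum_mul_left, ← ENNReal.tsum_add]
  refine ENNReal.tsum_le_tsum fun y => ?_
  by_cases hy : r ≤ ‖y‖
  · refine le_add_right ?_
    rw [if_pos hy, mul_one, mul_comm B]
    gcongr
    exact hg _
  · have hxy : r ≤ ‖x - y‖ := by linarith [norm_sub_norm_le x y]
    refine le_add_left ?_
    rw [if_pos hxy, mul_one]
    gcongr
    exact hf y

section HeatKernel

variable {d : ℕ} [NeZero d] {c₀ : ℝ}

lemma AdmissibleKernel.tsum_convPow_law_mul_ite_le_norm_le (K : AdmissibleKernel d c₀) {n : ℕ}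
    (hn : 0 < n) {r : ℝ} (hr : 0 ≤ r) :
    ∑' x, convPow K.law n x * (if r ≤ ‖x‖ then 1 else 0) ≤
      ENNReal.ofReal (2 * d * Real.exp (-(r ^ 2 / (2 * n * K.R ^ 2)))) := by
  have hunion (x : Fin d → ℤ) : (if r ≤ ‖x‖ then 1 else 0 : ℝ≥0∞) ≤
      ∑ i : Fin d, if r ≤ |(x i : ℝ)| then 1 else 0 := by
    split_ifs with h
    · obtain ⟨i, hi⟩ : ∃ i, r ≤ |(x i : ℝ)| := by
        obtain ⟨i, hi⟩ := Finite.exists_max fun i => ‖x i‖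
        exact ⟨i, Int.norm_eq_abs (x i) ▸ h.trans ((pi_norm_le_iff_of_nonempty x).mpr hi)⟩
      exact (if_pos hi).ge.trans (Finset.single_le_sum
        (f := fun i => if r ≤ |(x i : ℝ)| then (1 : ℝ≥0∞) else 0) (fun _ _ => zero_le)
        (Finset.mem_univ i))
    · exact zero_le
  calc ∑' x, convPow K.law n x * (if r ≤ ‖x‖ then 1 else 0)
      ≤ ∑ i : Fin d, ∑' x, convPow K.law n x * (if r ≤ |(x i : ℝ)| then 1 else 0) := by
        rw [← Summable.tsum_finsetSum fun _ _ => ENNReal.summable]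
        refine ENNReal.tsum_le_tsum fun x => ?_
        rw [← Finset.mul_sum]
        gcongr
        exact hunion x
    _ ≤ ∑ _i : Fin d, ENNReal.ofReal (2 * Real.exp (-(r ^ 2 / (2 * n * K.R ^ 2)))) :=
        Finset.sum_le_sum fun i _ =>
          tsum_convPow_mul_ite_le_abs_le K.law_isSymmFun.even K.tsum_law
            ((Int.castAddHom ℝ).comp (Pi.evalAddMonoidHom (fun _ => ℤ) i))
            (fun x hx => (Int.norm_eq_abs (x i)).ge.trans
              ((norm_le_pi_norm x i).trans (K.norm_le_of_law_ne_zero hx))) K.R_pos hn hr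
    _ = ENNReal.ofReal (2 * d * Real.exp (-(r ^ 2 / (2 * n * K.R ^ 2)))) := by
        rw [Finset.sum_const, Finset.card_univ, Fintype.card_fin, nsmul_eq_mul,
          ← ENNReal.ofReal_natCast, ← ENNReal.ofReal_mul (Nat.cast_nonneg d)]
        congr 1
        ring

variable (d) in
lemma exists_tsum_convPow_law_ball_le (hc₀ : 0 < c₀) :
    ∃ C > 0, ∀ (K : AdmissibleKernel d c₀) (n : ℕ) (x : Fin d → ℤ),
      ∑' y, convPow K.law n y * (if ‖x - y‖ ≤ K.R then 1 else 0) ≤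
        ENNReal.ofReal (C / √(n + 1) ^ d) := by
  have hd : (0 : ℝ) < d := by exact_mod_cast NeZero.pos d
  set k := ⌊√(2 * d) / c₀⌋₊ + 1
  set C := d * (k ^ d * ((1 + √d ^ d) / √(c₀ ^ 2 / (2 * d) / 4) ^ d))
  refine ⟨max 1 (√2 ^ d * C), by positivity, fun K n x => ?_⟩
  rcases Nat.eq_zero_or_pos n with rfl | hn
  · calc ∑' y, convPow K.law 0 y * (if ‖x - y‖ ≤ K.R then 1 else 0) ≤ 1 := by
          rw [convPow, tsum_delta_mul]
          split_ifs <;> simp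
      _ ≤ ENNReal.ofReal (max 1 (√2 ^ d * C) / √((0 : ℕ) + 1) ^ d) := by simp
  have hRk : K.R < k * (c₀ * K.R / √(2 * d)) := by
    have hk : √(2 * d) / c₀ < k := by
      simpa only [k, Nat.cast_add_one] using Nat.lt_floor_add_one (√(2 * d) / c₀)
    rw [div_lt_iff₀ hc₀] at hk
    rw [← mul_div_assoc, lt_div_iff₀ (by positivity), mul_comm K.R, ← mul_assoc]
    exact mul_lt_mul_of_pos_right hk K.R_pos
  have hsqrt : √((n : ℝ) + 1) ≤ √2 * √n := by
    rw [← Real.sqrt_mul two_pos.le]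
    exact Real.sqrt_le_sqrt (by linarith [(Nat.one_le_cast (α := ℝ)).mpr hn])
  rw [tsum_convPow_mul]
  refine (iidExp_ite_norm_sub_sum_le K.law_isSymmFun K.tsum_law
    (div_pos (mul_pos hc₀ K.R_pos) (by positivity)) hRk (by positivity)
    (K.le_tsum_law_large_coord hc₀) hn x).trans (ENNReal.ofReal_le_ofReal ?_)
  calc C / √n ^ d = √2 ^ d * C / (√2 * √n) ^ d := by rw [mul_pow]; field_simp
    _ ≤ max 1 (√2 ^ d * C) / √(n + 1) ^ d := by gcongr; exact le_max_right _ _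

variable (d) in
lemma exists_convPow_law_le (hc₀ : 0 < c₀) :
    ∃ C > 0, ∀ (K : AdmissibleKernel d c₀) {n : ℕ}, 0 < n → ∀ x : Fin d → ℤ,
      convPow K.law n x ≤ ENNReal.ofReal (C / (K.R ^ d * √n ^ d)) := by
  obtain ⟨C, hC, hball⟩ := exists_tsum_convPow_law_ball_le d hc₀
  refine ⟨c₀⁻¹ * C, by positivity, fun K n hn x => ?_⟩
  obtain ⟨m, rfl⟩ := Nat.exists_eq_add_one.mpr hn
  have hR := K.R_pos
  have hlaw (z : Fin d → ℤ) :
      K.law z ≤ ENNReal.ofReal (c₀⁻¹ / K.R ^ d) * if ‖z‖ ≤ K.R then 1 else 0 := by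
    rcases eq_or_ne (K.law z) 0 with hz | hz
    · exact hz.trans_le zero_le
    · rw [if_pos (K.norm_le_of_law_ne_zero hz), mul_one]
      exact ENNReal.ofReal_le_ofReal (K.J_upper z)
  calc convPow K.law (m + 1) x
      ≤ ENNReal.ofReal (c₀⁻¹ / K.R ^ d) *
          ∑' y, convPow K.law m y * (if ‖x - y‖ ≤ K.R then 1 else 0) := by
        rw [convPow, conv_comm, conv, ← ENNReal.tsum_mul_left]
        refine ENNReal.tsum_le_tsum fun y => ?_
        rw [mul_left_comm]
        gcongr
        exact hlaw _
    _ ≤ ENNReal.ofReal (c₀⁻¹ / K.R ^ d) * ENNReal.ofReal (C / √(m + 1) ^ d) := by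
        gcongr
        exact hball K m x
    _ = ENNReal.ofReal (c₀⁻¹ * C / (K.R ^ d * √(m + 1 : ℕ) ^ d)) := by
        rw [← ENNReal.ofReal_mul (by positivity), div_mul_div_comm, Nat.cast_add_one]

lemma div_mul_sqrt_pow_le_of_le_three_mul {C r : ℝ} (hC : 0 ≤ C) (hr : 0 ≤ r) (d : ℕ) {l n : ℕ}
    (hn : 0 < n) (h : n ≤ 3 * l) : C / (r * √l ^ d) ≤ √3 ^ d * C / (r * √n ^ d) := by
  have hsqrt : √(n : ℝ) ≤ √3 * √l := by
    rw [← Real.sqrt_mul (by norm_num)]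
    exact Real.sqrt_le_sqrt (by exact_mod_cast h)
  rcases hr.eq_or_lt with rfl | hr
  · simp
  calc C / (r * √l ^ d) = √3 ^ d * C / (r * (√3 * √l) ^ d) := by rw [mul_pow]; field_simp
    _ ≤ √3 ^ d * C / (r * √n ^ d) := by gcongr

lemma convPow_law_le_mul_exp_of_two_le {K : AdmissibleKernel d c₀} {C : ℝ} (hC : 0 < C)
    (hsup : ∀ {n : ℕ}, 0 < n → ∀ x, convPow K.law n x ≤ ENNReal.ofReal (C / (K.R ^ d * √n ^ d)))
    {n : ℕ} (hn : 2 ≤ n) (x : Fin d → ℤ) :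
    convPow K.law n x ≤ ENNReal.ofReal (4 * d * √3 ^ d * C / (K.R ^ d * √n ^ d) *
      Real.exp (-(‖x‖ ^ 2 / (8 * n * K.R ^ 2)))) := by
  have hR := K.R_pos
  have hsup' {l : ℕ} (hl : 0 < l) (hl3 : n ≤ 3 * l) (z : Fin d → ℤ) :
      convPow K.law l z ≤ ENNReal.ofReal (√3 ^ d * C / (K.R ^ d * √n ^ d)) :=
    (hsup hl z).trans (ENNReal.ofReal_le_ofReal
      (div_mul_sqrt_pow_le_of_le_three_mul hC.le (by positivity) d (by omega) hl3))
  have htail {l : ℕ} (hl : 0 < l) (hln : l ≤ n) :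
      ∑' z, convPow K.law l z * (if ‖x‖ / 2 ≤ ‖z‖ then 1 else 0) ≤
        ENNReal.ofReal (2 * d * Real.exp (-(‖x‖ ^ 2 / (8 * n * K.R ^ 2)))) := by
    refine (K.tsum_convPow_law_mul_ite_le_norm_le hl (by positivity)).trans
      (ENNReal.ofReal_le_ofReal ?_)
    calc 2 * d * Real.exp (-((‖x‖ / 2) ^ 2 / (2 * l * K.R ^ 2)))
        = 2 * d * Real.exp (-(‖x‖ ^ 2 / (8 * l * K.R ^ 2))) := by ring_nf
      _ ≤ 2 * d * Real.exp (-(‖x‖ ^ 2 / (8 * n * K.R ^ 2))) := by gcongr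
  calc convPow K.law n x = conv (convPow K.law (n / 2)) (convPow K.law (n - n / 2)) x := by
        rw [← convPow_add, Nat.add_sub_cancel' (Nat.div_le_self n 2)]
    _ ≤ _ := conv_le_add_of_two_mul_le_norm (hsup' (by omega) (by omega))
        (hsup' (by omega) (by omega)) (mul_div_cancel₀ ‖x‖ two_ne_zero).le
    _ ≤ ENNReal.ofReal (√3 ^ d * C / (K.R ^ d * √n ^ d)) *
          ENNReal.ofReal (2 * d * Real.exp (-(‖x‖ ^ 2 / (8 * n * K.R ^ 2)))) +
        ENNReal.ofReal (√3 ^ d * C / (K.R ^ d * √n ^ d)) *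
          ENNReal.ofReal (2 * d * Real.exp (-(‖x‖ ^ 2 / (8 * n * K.R ^ 2)))) := by
        gcongr
        · exact htail (by omega) (by omega)
        · exact htail (by omega) (by omega)
    _ = _ := by
        rw [← ENNReal.ofReal_mul (by positivity), ← ENNReal.ofReal_add (by positivity)
          (by positivity)]
        congr 1
        ring

variable (d) in
lemma exists_convPow_law_le_mul_exp (hc₀ : 0 < c₀) :
    ∃ C > 0, ∀ (K : AdmissibleKernel d c₀) {n : ℕ}, 0 < n → ∀ x : Fin d → ℤ,
      convPow K.law n x ≤ ENNReal.ofReal (C / (K.R ^ d * √n ^ d) *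
        Real.exp (-(‖x‖ ^ 2 / (8 * n * K.R ^ 2)))) := by
  obtain ⟨C, hC, hsup⟩ := exists_convPow_law_le d hc₀
  refine ⟨max (4 * d * √3 ^ d * C) (C * Real.exp (1 / 8)), by positivity, fun K n hn x => ?_⟩
  have hR := K.R_pos
  rcases Nat.lt_or_ge 1 n with hn₂ | hn₁
  · refine (convPow_law_le_mul_exp_of_two_le hC (hsup K) hn₂ x).trans
      (ENNReal.ofReal_le_ofReal ?_)
    gcongr
    exact le_max_left _ _
  obtain rfl : n = 1 := le_antisymm hn₁ hn
  rcases eq_or_ne (K.law x) 0 with hx | hx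
  · rw [convPow, convPow, conv_delta, hx]
    exact zero_le
  have hexp : -(1 / 8) ≤ -(‖x‖ ^ 2 / (8 * (1 : ℕ) * K.R ^ 2)) := by
    rw [neg_le_neg_iff, div_le_div_iff₀ (by positivity) (by norm_num)]
    have := pow_le_pow_left₀ (norm_nonneg x) (K.norm_le_of_law_ne_zero hx) 2
    push_cast
    linarith
  refine (hsup K one_pos x).trans (ENNReal.ofReal_le_ofReal ?_)
  calc C / (K.R ^ d * √(1 : ℕ) ^ d)
      = C * Real.exp (1 / 8) / (K.R ^ d * √(1 : ℕ) ^ d) * Real.exp (-(1 / 8)) := by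
        rw [Real.exp_neg]; field_simp
    _ ≤ _ := by
        gcongr
        exact le_max_right _ _

end HeatKernel

/-! ### The Green function -/

lemma sum_range_inv_sqrt_cube_le {A : ℝ} (hA : 0 < A) (M : ℕ) :
    ∑ n ∈ Finset.range M, 1 / √(A ^ 2 + (n + 1)) ^ 3 ≤ 2 / A - 2 / √(A ^ 2 + M) := by
  induction M with
  | zero => simp [Real.sqrt_sq hA.le]
  | succ M ih =>
    rw [Finset.sum_range_succ, Nat.cast_add_one]
    set u := √(A ^ 2 + M)
    set z := √(A ^ 2 + (M + 1))
    have hu : 0 < u := Real.sqrt_pos.mpr (by positivity)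
    have huz : u ≤ z := Real.sqrt_le_sqrt (by linarith)
    have hz : 0 < z := hu.trans_le huz
    have hsq : (z - u) * (z + u) = 1 := by
      rw [mul_comm, ← sq_sub_sq, Real.sq_sqrt (by positivity), Real.sq_sqrt (by positivity)]
      ring
    have hstep : 1 / z ^ 3 ≤ 2 / u - 2 / z := by
      calc 1 / z ^ 3 = 2 / (z * z * (z + z)) := by field_simp; norm_num
        _ ≤ 2 / (u * z * (z + u)) := by gcongr
        _ = 2 / u - 2 / z := by field_simp; linarith
    linarith

lemma tsum_inv_sqrt_pow_le {d : ℕ} (hd : 2 < d) {A : ℝ} (hA : 0 < A) :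
    ∑' n : ℕ, ENNReal.ofReal (1 / √(A ^ 2 + (n + 1)) ^ d) ≤ ENNReal.ofReal (2 / A ^ (d - 2)) := by
  obtain ⟨m, rfl⟩ := Nat.exists_eq_add_of_lt hd
  have hterm (n : ℕ) : 1 / √(A ^ 2 + (n + 1)) ^ (2 + m + 1) ≤
      1 / A ^ m * (1 / √(A ^ 2 + (n + 1)) ^ 3) := by
    have hle : A ≤ √(A ^ 2 + (n + 1)) := Real.le_sqrt_of_sq_le (by linarith)
    calc 1 / √(A ^ 2 + (n + 1)) ^ (2 + m + 1)
        = 1 / √(A ^ 2 + (n + 1)) ^ m * (1 / √(A ^ 2 + (n + 1)) ^ 3) := by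
          rw [one_div_mul_one_div, ← pow_add]; congr 2; ring
      _ ≤ 1 / A ^ m * (1 / √(A ^ 2 + (n + 1)) ^ 3) := by gcongr
  refine ENNReal.tsum_le_of_sum_range_le fun M => ?_
  rw [← ENNReal.ofReal_sum_of_nonneg fun _ _ => by positivity]
  refine ENNReal.ofReal_le_ofReal ?_
  calc ∑ n ∈ Finset.range M, 1 / √(A ^ 2 + (n + 1)) ^ (2 + m + 1)
      ≤ 1 / A ^ m * ∑ n ∈ Finset.range M, 1 / √(A ^ 2 + (n + 1)) ^ 3 := by
        rw [Finset.mul_sum]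
        exact Finset.sum_le_sum fun n _ => hterm n
    _ ≤ 1 / A ^ m * (2 / A) := by
        gcongr
        exact (sum_range_inv_sqrt_cube_le hA M).trans (sub_le_self _ (by positivity))
    _ = 2 / A ^ (2 + m + 1 - 2) := by
        rw [show 2 + m + 1 - 2 = m + 1 by omega, pow_succ]
        field_simp

lemma exp_neg_div_sqrt_pow_le (d : ℕ) (ρ : ℝ) {N : ℝ} (hN : 1 ≤ N) :
    Real.exp (-(ρ ^ 2 / (16 * N))) / √N ^ d ≤
      Real.exp (1 / 16) * (4 * √2 * √d) ^ d * (1 / √(max 1 ρ ^ 2 + N) ^ d) := by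
  have hN₀ : 0 < N := one_pos.trans_le hN
  have hsqrt : √(max 1 ρ ^ 2 + N) ≤ 4 * √2 * (√N * √(ρ ^ 2 / (16 * N) + 1 / 16)) := by
    rw [← Real.sqrt_mul hN₀.le, show N * (ρ ^ 2 / (16 * N) + 1 / 16) = (ρ ^ 2 + N) / 4 ^ 2 by
      field_simp; norm_num, Real.sqrt_div (by positivity), Real.sqrt_sq (by norm_num),
      show 4 * √2 * (√(ρ ^ 2 + N) / 4) = √2 * √(ρ ^ 2 + N) by ring, ← Real.sqrt_mul two_pos.le]
    refine Real.sqrt_le_sqrt ?_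
    rcases max_cases 1 ρ with ⟨hmax, -⟩ | ⟨hmax, -⟩ <;> rw [hmax] <;> nlinarith
  calc Real.exp (-(ρ ^ 2 / (16 * N))) / √N ^ d
      = Real.exp (1 / 16) * Real.exp (-(ρ ^ 2 / (16 * N) + 1 / 16)) / √N ^ d := by
        rw [← Real.exp_add]; ring_nf
    _ ≤ Real.exp (1 / 16) * (√d / √(ρ ^ 2 / (16 * N) + 1 / 16)) ^ d / √N ^ d := by
        gcongr
        exact exp_neg_le_sqrt_div_sqrt_pow d (by positivity)
    _ = Real.exp (1 / 16) * (4 * √2 * √d) ^ d *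
          (1 / (4 * √2 * (√N * √(ρ ^ 2 / (16 * N) + 1 / 16))) ^ d) := by
        have : 0 < √(ρ ^ 2 / (16 * N) + 1 / 16) := Real.sqrt_pos.mpr (by positivity)
        simp only [div_pow, mul_pow]
        field_simp
    _ ≤ Real.exp (1 / 16) * (4 * √2 * √d) ^ d * (1 / √(max 1 ρ ^ 2 + N) ^ d) := by gcongr

/-- AM–GM: `(1 - β) N + ρ² / (16 N) ≥ √(1 - β) ρ / 2`. -/
lemma pow_mul_exp_neg_le {β : ℝ} (hβ₀ : 0 ≤ β) (hβ₁ : β ≤ 1) (ρ : ℝ) (n : ℕ) :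
    β ^ n * Real.exp (-(ρ ^ 2 / (16 * (n + 1)))) ≤ 3 * Real.exp (-(√(1 - β) * ρ / 2)) := by
  have hamgm : √(1 - β) * ρ / 2 ≤ (1 - β) * (n + 1) + ρ ^ 2 / (16 * (n + 1)) := by
    have hsq : (1 - β) * (n + 1) + ρ ^ 2 / (16 * (n + 1)) - √(1 - β) * ρ / 2 =
        (4 * √(1 - β) * (n + 1) - ρ) ^ 2 / (16 * (n + 1)) := by
      nth_rw 1 [← Real.sq_sqrt (sub_nonneg.mpr hβ₁)]
      field_simp
      ring
    rw [← sub_nonneg, hsq]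
    positivity
  calc β ^ n * Real.exp (-(ρ ^ 2 / (16 * (n + 1))))
      ≤ Real.exp (-(1 - β)) ^ n * Real.exp (-(ρ ^ 2 / (16 * (n + 1)))) := by
        gcongr
        linarith [Real.add_one_le_exp (-(1 - β))]
    _ = Real.exp (1 - β) * Real.exp (-((1 - β) * (n + 1) + ρ ^ 2 / (16 * (n + 1)))) := by
        rw [← Real.exp_nat_mul, ← Real.exp_add, ← Real.exp_add]
        ring_nf
    _ ≤ 3 * Real.exp (-(√(1 - β) * ρ / 2)) := by
        gcongr
        exact (Real.exp_le_exp.mpr (by linarith)).trans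
          (Real.exp_one_lt_d9.le.trans (by norm_num))

lemma exists_pow_mul_convPow_law_le (d : ℕ) [NeZero d] {c₀ : ℝ} (hc₀ : 0 < c₀) :
    ∃ C > 0, ∀ (K : AdmissibleKernel d c₀) {β : ℝ}, 0 ≤ β → β ≤ 1 → ∀ (n : ℕ) (x : Fin d → ℤ),
      ENNReal.ofReal β ^ n * convPow K.law (n + 1) x ≤
        ENNReal.ofReal (C / K.R ^ d * Real.exp (-(√(1 - β) * (‖x‖ / K.R) / 2)) *
          (1 / √(max 1 (‖x‖ / K.R) ^ 2 + (n + 1)) ^ d)) := by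
  have hd : (0 : ℝ) < d := by exact_mod_cast NeZero.pos d
  obtain ⟨C, hC, hheat⟩ := exists_convPow_law_le_mul_exp d hc₀
  set D := Real.exp (1 / 16) * (4 * √2 * √d) ^ d
  refine ⟨3 * C * D, by positivity, fun K β hβ₀ hβ₁ n x => ?_⟩
  have hR := K.R_pos
  set ρ := ‖x‖ / K.R with hρ
  have hsplit : Real.exp (-(‖x‖ ^ 2 / (8 * (n + 1) * K.R ^ 2))) =
      Real.exp (-(ρ ^ 2 / (16 * (n + 1)))) * Real.exp (-(ρ ^ 2 / (16 * (n + 1)))) := by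
    rw [← Real.exp_add, hρ]
    congr 1
    field_simp
    ring
  refine (mul_le_mul_right (hheat K n.succ_pos x) _).trans ?_
  rw [← ENNReal.ofReal_pow hβ₀, ← ENNReal.ofReal_mul (by positivity), Nat.cast_succ]
  refine ENNReal.ofReal_le_ofReal ?_
  calc β ^ n * (C / (K.R ^ d * √(n + 1) ^ d) *
        Real.exp (-(‖x‖ ^ 2 / (8 * (n + 1) * K.R ^ 2))))
      = C / K.R ^ d * (β ^ n * Real.exp (-(ρ ^ 2 / (16 * (n + 1)))) *
          (Real.exp (-(ρ ^ 2 / (16 * (n + 1)))) / √(n + 1) ^ d)) := by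
        rw [hsplit]; field_simp
    _ ≤ C / K.R ^ d * (3 * Real.exp (-(√(1 - β) * ρ / 2)) *
          (D * (1 / √(max 1 ρ ^ 2 + (n + 1)) ^ d))) :=
        mul_le_mul_of_nonneg_left (mul_le_mul (pow_mul_exp_neg_le hβ₀ hβ₁ ρ n)
          (exp_neg_div_sqrt_pow_le d ρ (by linarith [n.cast_nonneg (α := ℝ)]))
          (by positivity) (by positivity)) (by positivity)
    _ = _ := by ring

lemma exists_conv_green_law_le {d : ℕ} (hd : 2 < d) {c₀ : ℝ} (hc₀ : 0 < c₀) :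
    ∃ C > 0, ∀ (K : AdmissibleKernel d c₀) {β : ℝ}, 0 ≤ β → β ≤ 1 → ∀ x : Fin d → ℤ,
      conv K.law (green K.law (ENNReal.ofReal β)) x ≤
        ENNReal.ofReal (C / K.R ^ d * (1 / max 1 (‖x‖ / K.R) ^ (d - 2)) *
          Real.exp (-(√(1 - β) * (‖x‖ / K.R) / 2))) := by
  have : NeZero d := ⟨by omega⟩
  obtain ⟨C, hC, hterm⟩ := exists_pow_mul_convPow_law_le d hc₀
  refine ⟨2 * C, by positivity, fun K β hβ₀ hβ₁ x => ?_⟩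
  have hR := K.R_pos
  set A := max 1 (‖x‖ / K.R)
  set e := Real.exp (-(√(1 - β) * (‖x‖ / K.R) / 2))
  calc conv K.law (green K.law (ENNReal.ofReal β)) x
      ≤ ∑' n : ℕ, ENNReal.ofReal (C / K.R ^ d * e) *
          ENNReal.ofReal (1 / √(A ^ 2 + (n + 1)) ^ d) := by
        rw [conv_green]
        refine ENNReal.tsum_le_tsum fun n => (hterm K hβ₀ hβ₁ n x).trans_eq ?_
        rw [ENNReal.ofReal_mul (by positivity)]
    _ ≤ ENNReal.ofReal (C / K.R ^ d * e) * ENNReal.ofReal (2 / A ^ (d - 2)) := by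
        rw [ENNReal.tsum_mul_left]
        gcongr
        exact tsum_inv_sqrt_pow_le hd (by positivity)
    _ = _ := by
        rw [← ENNReal.ofReal_mul (by positivity)]
        congr 1
        ring

/-! ### Exponential decay -/

section ExponentialDecay

variable {d : ℕ} {f : (Fin d → ℤ) → ℝ≥0∞}

/-- Exponential decay of a function on `ℤ^d`, with respect to the supremum norm. -/
def HasExpDecay (f : (Fin d → ℤ) → ℝ≥0∞) : Prop :=
  ∃ C > (0 : ℝ), ∃ c > (0 : ℝ), ∀ x, f x ≤ ENNReal.ofReal (C * Real.exp (-c * supNorm x))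

lemma tsum_int_exp_neg_ne_top {a : ℝ} (ha : 0 < a) :
    ∑' z : ℤ, ENNReal.ofReal (Real.exp (-a * |(z : ℝ)|)) ≠ ⊤ := by
  have hnat : Summable fun n : ℕ => Real.exp (-a * n) := by
    simpa only [mul_comm] using Real.summable_exp_nat_mul_iff.mpr (neg_neg_of_pos ha)
  refine (Summable.of_nat_of_neg ?_ ?_).tsum_ofReal_ne_top <;> simpa using hnat

lemma tsum_exp_neg_supNorm_ne_top {a : ℝ} (ha : 0 < a) :
    ∑' x : Fin d → ℤ, ENNReal.ofReal (Real.exp (-a * supNorm x)) ≠ ⊤ := by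
  have hterm (x : Fin d → ℤ) : Real.exp (-a * supNorm x) ≤
      ∏ i, Real.exp (-(a / (d + 1)) * |(x i : ℝ)|) := by
    have hcoord (i : Fin d) : a / (d + 1) * |(x i : ℝ)| ≤ a / (d + 1) * ‖x‖ := by
      gcongr
      exact (Int.norm_eq_abs (x i)).symm.trans_le (norm_le_pi_norm x i)
    rw [← Real.exp_sum, supNorm_eq_norm]
    simp only [neg_mul, Finset.sum_neg_distrib]
    gcongr
    calc ∑ i, a / (d + 1) * |(x i : ℝ)| ≤ ∑ _i : Fin d, a / (d + 1) * ‖x‖ :=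
          Finset.sum_le_sum fun i _ => hcoord i
      _ = d / (d + 1) * (a * ‖x‖) := by
          rw [Fin.sum_const, nsmul_eq_mul]
          ring
      _ ≤ a * ‖x‖ := mul_le_of_le_one_left (by positivity)
          ((div_le_one (by positivity)).mpr (by linarith))
  refine ne_top_of_le_ne_top (ENNReal.pow_ne_top (tsum_int_exp_neg_ne_top
    (a := a / (d + 1)) (by positivity)) (n := d)) ?_
  rw [← tsum_fin_prod]
  refine ENNReal.tsum_le_tsum fun x => ?_
  rw [← ENNReal.ofReal_prod_of_nonneg fun i _ => Real.exp_nonneg _]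
  exact ENNReal.ofReal_le_ofReal (hterm x)

lemma sqNorm_mul_exp_neg_le (x : Fin d → ℤ) {a : ℝ} (ha : 0 < a) :
    sqNorm x * Real.exp (-a * supNorm x) ≤ 8 * d / a ^ 2 * Real.exp (-(a / 2) * supNorm x) := by
  rw [supNorm_eq_norm]
  have hquad : ‖x‖ ^ 2 ≤ 8 / a ^ 2 * Real.exp (a / 2 * ‖x‖) := by
    have hexp := Real.quadratic_le_exp_of_nonneg (x := a / 2 * ‖x‖) (by positivity)
    calc ‖x‖ ^ 2 = 8 / a ^ 2 * ((a / 2 * ‖x‖) ^ 2 / 2) := by field_simp; ring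
      _ ≤ 8 / a ^ 2 * Real.exp (a / 2 * ‖x‖) := by
          gcongr
          linarith [show 0 ≤ a / 2 * ‖x‖ by positivity]
  calc sqNorm x * Real.exp (-a * ‖x‖)
      ≤ d * (8 / a ^ 2 * Real.exp (a / 2 * ‖x‖)) * Real.exp (-a * ‖x‖) := by
        gcongr
        exact (sqNorm_le x).trans (by gcongr)
    _ = 8 * d / a ^ 2 * (Real.exp (a / 2 * ‖x‖) * Real.exp (-a * ‖x‖)) := by ring
    _ = 8 * d / a ^ 2 * Real.exp (-(a / 2) * ‖x‖) := by
        rw [← Real.exp_add]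
        ring_nf

lemma HasExpDecay.tsum_ne_top (hf : HasExpDecay f) : ∑' x, f x ≠ ⊤ := by
  obtain ⟨C, hC, c, hc, hf⟩ := hf
  refine ne_top_of_le_ne_top ?_ (ENNReal.tsum_le_tsum hf)
  simp only [ENNReal.ofReal_mul hC.le, ENNReal.tsum_mul_left]
  exact ENNReal.mul_ne_top ENNReal.ofReal_ne_top (tsum_exp_neg_supNorm_ne_top hc)

lemma HasExpDecay.secondMoment_ne_top (hf : HasExpDecay f) : secondMoment f ≠ ⊤ := by
  obtain ⟨C, hC, c, hc, hf⟩ := hf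
  have hdecay : HasExpDecay fun x => ENNReal.ofReal (sqNorm x) * f x := by
    refine ⟨C * (8 * d / c ^ 2 + 1), by positivity, c / 2, by positivity, fun x => ?_⟩
    refine (mul_le_mul_right (hf x) _).trans ?_
    rw [← ENNReal.ofReal_mul (sqNorm_nonneg x), mul_left_comm, mul_assoc]
    refine ENNReal.ofReal_le_ofReal (mul_le_mul_of_nonneg_left ?_ hC.le)
    exact (sqNorm_mul_exp_neg_le x hc).trans
      (mul_le_mul_of_nonneg_right (by linarith) (Real.exp_nonneg _))
  exact hdecay.tsum_ne_top

end ExponentialDecay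

/-! ### A comparison principle -/

section Comparison

open Set Filter Topology

variable {V : Type*}

lemma eventually_lt_slope_tsum {g : ℝ → V → ℝ} {g' L : V → ℝ} {t b ℓ r : ℝ} (htb : t < b)
    (hmono : ∀ x, MonotoneOn (fun s => g s x) (Icc t b)) (hg : ∀ s ∈ Icc t b, Summable (g s))
    (hderiv : ∀ x, HasDerivWithinAt (fun s => g s x) (g' x) (Ioi t) t) (hL : L ≤ g')
    (hℓ : HasSum L ℓ) (hr : r < ℓ) :
    ∀ᶠ z in 𝓝[>] t, r < slope (fun s => ∑' x, g s x) t z := by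
  obtain ⟨S, hS⟩ := (hℓ.eventually (lt_mem_nhds hr)).exists
  have hpartial : HasDerivWithinAt (fun s => ∑ x ∈ S, g s x) (∑ x ∈ S, g' x) (Ioi t) t :=
    HasDerivWithinAt.fun_sum fun x _ => hderiv x
  have hslope := ((hasDerivWithinAt_iff_tendsto_slope' (by simp)).mp hpartial).eventually
    (lt_mem_nhds (hS.trans_le (Finset.sum_le_sum fun x _ => hL x)))
  filter_upwards [hslope, Ioc_mem_nhdsGT htb] with z hz hzb
  have ht : t ∈ Icc t b := ⟨le_rfl, htb.le⟩
  have hz' : z ∈ Icc t b := ⟨hzb.1.le, hzb.2⟩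
  refine hz.trans_le ?_
  rw [slope_def_field, slope_def_field, ← Finset.sum_sub_distrib, ← (hg z hz').tsum_sub (hg t ht)]
  refine div_le_div_of_nonneg_right ?_ (sub_nonneg.mpr hzb.1.le)
  exact ((hg z hz').sub (hg t ht)).sum_le_tsum S fun x _ =>
    sub_nonneg.mpr (hmono x ht hz' hzb.1.le)

theorem barrier_le_tsum {g g' L : ℝ → V → ℝ} {ℓ B B' : ℝ → ℝ} {a b : ℝ}
    (hmono : ∀ x, MonotoneOn (fun t => g t x) (Icc a b)) (hnonneg : ∀ t ∈ Icc a b, 0 ≤ g t)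
    (hg : ∀ t ∈ Icc a b, Summable (g t))
    (hderiv : ∀ t ∈ Icc a b, ∀ x, HasDerivWithinAt (fun s => g s x) (g' t x) (Ici a) t)
    (hL : ∀ t ∈ Icc a b, L t ≤ g' t) (hℓ : ∀ t ∈ Icc a b, HasSum (L t) (ℓ t))
    (hB : ∀ t ∈ Icc a b, HasDerivAt B (B' t) t) (hBa : B a ≤ ∑' x, g a x)
    (hcross : ∀ t ∈ Ico a b, ∑' x, g t x = B t → B' t < ℓ t) {t : ℝ} (ht : t ∈ Icc a b) :
    B t ≤ ∑' x, g t x := by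
  have hb : b ∈ Icc a b := ⟨ht.1.trans ht.2, le_rfl⟩
  have hcont : ContinuousOn (fun t => ∑' x, g t x) (Icc a b) := by
    refine continuousOn_tsum (u := g b) (fun x t ht => ?_) (hg b hb) fun x t ht => ?_
    · exact (hderiv t ht x).continuousWithinAt.mono Icc_subset_Ici_self
    · rw [Real.norm_of_nonneg (hnonneg t ht x)]
      exact hmono x ht hb ht.2
  have hslope : ∀ t ∈ Ico a b, ∀ r, -ℓ t < r →
      ∃ᶠ z in 𝓝[>] t, slope (-fun t => ∑' x, g t x) t z < r := fun t ht r hr => by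
    have ht' := Ico_subset_Icc_self ht
    refine Eventually.frequently ?_
    filter_upwards [eventually_lt_slope_tsum ht.2
      (fun x => (hmono x).mono (Icc_subset_Icc_left ht.1))
      (fun s hs => hg s ⟨ht.1.trans hs.1, hs.2⟩)
      (fun x => (hderiv t ht' x).mono fun y hy => ht.1.trans (le_of_lt hy)) (hL t ht') (hℓ t ht')
      (neg_lt.mp hr)] with z hz
    rw [slope_neg_fun]
    exact neg_lt.mp hz
  exact neg_le_neg_iff.mp <| image_le_of_liminf_slope_right_lt_deriv_boundary' hcont.neg hslope
    (B := -B) (B' := fun t => -B' t) (neg_le_neg hBa)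
    (fun t ht => (hB t ht).neg.continuousAt.continuousWithinAt)
    (fun t ht => (hB t (Ico_subset_Icc_self ht)).neg.hasDerivWithinAt)
    (fun t ht h => neg_lt_neg (hcross t ht (neg_injective h))) ht

end Comparison

/-! ### Subcritical models -/

lemma hasSum_sqNorm_mul_toReal {d : ℕ} {f : (Fin d → ℤ) → ℝ≥0∞} (hf : secondMoment f ≠ ⊤) :
    HasSum (fun x => sqNorm x * (f x).toReal) (secondMoment f).toReal := by
  have hsum := ENNReal.hasSum_toReal hf
  simp only [ENNReal.toReal_mul, ENNReal.toReal_ofReal (sqNorm_nonneg _)] at hsum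
  rwa [secondMoment, ENNReal.tsum_toReal_eq fun x => ENNReal.ne_top_of_tsum_ne_top hf x,
    tsum_congr fun x => by rw [ENNReal.toReal_mul, ENNReal.toReal_ofReal (sqNorm_nonneg x)]]

lemma hasSum_toReal_tsum {α : Type*} {f : α → ℝ≥0∞} (hf : ∑' x, f x ≠ ⊤) :
    HasSum (fun x => (f x).toReal) (∑' x, f x).toReal := by
  rw [ENNReal.tsum_toReal_eq fun x => ENNReal.ne_top_of_tsum_ne_top hf x]
  exact ENNReal.hasSum_toReal hf

lemma tsum_conv_conv_self {V : Type*} [AddCommGroup V] (g k : V → ℝ≥0∞) :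
    ∑' x, conv g (conv k g) x = (∑' x, g x) ^ 2 * ∑' x, k x := by
  rw [tsum_conv, tsum_conv]
  ring

lemma secondMoment_conv_conv_self {d : ℕ} {g k : (Fin d → ℤ) → ℝ≥0∞} (hg : g.Even)
    (hk : k.Even) : secondMoment (conv g (conv k g)) =
      2 * secondMoment g * (∑' x, g x) * (∑' x, k x) + (∑' x, g x) ^ 2 * secondMoment k := by
  rw [secondMoment_conv hg, secondMoment_conv hk, tsum_conv]
  ring

namespace Model

variable {d : ℕ} {c₀ : ℝ} (M : Model d c₀) {t : ℝ}

/-- The parameters `t ∈ [0, β_c)`. -/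
def Subcritical (t : ℝ) : Prop := 0 ≤ t ∧ ENNReal.ofReal t < M.βc

/-- The error kernel `H_t`, with values in `[0, ∞]`. -/
def errorKernel (t : ℝ) (x : Fin d → ℤ) : ℝ≥0∞ := ENNReal.ofReal (M.H t x)

variable {M}

lemma Subcritical.mono {s : ℝ} (h : M.Subcritical t) (hs : 0 ≤ s) (hst : s ≤ t) :
    M.Subcritical s :=
  ⟨hs, (ENNReal.ofReal_le_ofReal hst).trans_lt h.2⟩

lemma Subcritical.hasExpDecay_G (h : M.Subcritical t) : HasExpDecay (M.G t) := M.expDecay h.1 h.2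

lemma Subcritical.hasExpDecay_errorKernel (h : M.Subcritical t) :
    HasExpDecay (M.errorKernel t) := by
  obtain ⟨C, hC, c, hc, hH⟩ := M.H_expDecay h.1 h.2
  exact ⟨C, hC, c, hc, fun x => ENNReal.ofReal_le_ofReal (hH x)⟩

lemma Subcritical.chi_ne_top (h : M.Subcritical t) : M.chi t ≠ ⊤ := h.hasExpDecay_G.tsum_ne_top

lemma Subcritical.G_ne_top (h : M.Subcritical t) (x : Fin d → ℤ) : M.G t x ≠ ⊤ :=
  ENNReal.ne_top_of_tsum_ne_top h.chi_ne_top x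

lemma Subcritical.secondMoment_G_ne_top (h : M.Subcritical t) : secondMoment (M.G t) ≠ ⊤ :=
  h.hasExpDecay_G.secondMoment_ne_top

lemma Subcritical.tsum_H (h : M.Subcritical t) :
    ∑' x, M.H t x = (∑' x, M.errorKernel t x).toReal := by
  rw [← (hasSum_toReal_tsum h.hasExpDecay_errorKernel.tsum_ne_top).tsum_eq]
  exact tsum_congr fun x => (ENNReal.toReal_ofReal (M.H_nonneg t x)).symm

lemma Subcritical.tsum_sqNorm_mul_H (h : M.Subcritical t) :
    ∑' x, sqNorm x * M.H t x = (secondMoment (M.errorKernel t)).toReal := by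
  rw [← (hasSum_sqNorm_mul_toReal h.hasExpDecay_errorKernel.secondMoment_ne_top).tsum_eq]
  exact tsum_congr fun x => congrArg _ (ENNReal.toReal_ofReal (M.H_nonneg t x)).symm

lemma G_zero : M.G 0 = delta := funext fun x => (M.init x).trans (by rfl)

lemma G_even : (M.G t).Even := (M.symm t).even

lemma errorKernel_even : (M.errorKernel t).Even := fun x => congrArg ENNReal.ofReal (M.H_symm t x)

lemma one_le_chi (h₀ : 0 ≤ t) (h : ENNReal.ofReal t ≤ M.βc) : 1 ≤ M.chi t :=
  calc 1 = M.G 0 0 := by simp only [M.init, if_pos]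
    _ ≤ M.G t 0 := M.mono 0 le_rfl h₀ h
    _ ≤ M.chi t := ENNReal.le_tsum 0

lemma Subcritical.one_le_toReal_chi (h : M.Subcritical t) : 1 ≤ (M.chi t).toReal := by
  simpa using ENNReal.toReal_mono h.chi_ne_top (one_le_chi h.1 h.2.le)

/-! ### Random-walk domination -/

lemma Subcritical.G_le_delta_add (h : M.Subcritical t) :
    M.G t ≤ delta + ENNReal.ofReal t • conv M.K.law (M.G t) := fun x => by
  have hI := M.I1 le_rfl h.1 h.2 x
  rw [sub_zero] at hI
  refine hI.trans_eq ?_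
  rw [G_zero, show (∑' p : (Fin d → ℤ) × (Fin d → ℤ),
    delta p.1 * ENNReal.ofReal (M.K.J p.2) * M.G t (x - p.1 - p.2)) = _ from
      tsum_prod_eq_conv_conv delta M.K.law (M.G t) x, delta_conv]
  rfl

lemma G_le_green (h₀ : 0 ≤ t) (h₁ : t < 1) (h : ENNReal.ofReal t ≤ M.βc) :
    M.G t ≤ green M.K.law (ENNReal.ofReal t) := by
  have hsub {s : ℝ} (hs : M.Subcritical s) (hs₁ : s < 1) :
      M.G s ≤ green M.K.law (ENNReal.ofReal s) :=
    le_green M.K.tsum_law (ENNReal.ofReal_lt_one.mpr hs₁) hs.chi_ne_top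
      (fun x => ENNReal.le_tsum x) hs.G_le_delta_add
  rcases h.lt_or_eq with hlt | heq
  · exact hsub ⟨h₀, hlt⟩ h₁
  · intro x
    have hlimit := M.limit (heq ▸ ENNReal.ofReal_ne_top) x
    rw [← heq, ENNReal.toReal_ofReal h₀] at hlimit
    rw [hlimit]
    refine iSup₂_le fun s hs => ?_
    have hst : ENNReal.ofReal s < ENNReal.ofReal t :=
      (ENNReal.ofReal_lt_ofReal_iff (hs.1.trans_lt hs.2)).mpr hs.2
    refine (hsub ⟨hs.1, hst.trans_eq heq⟩ (hs.2.trans h₁) x).trans ?_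
    exact ENNReal.tsum_le_tsum fun n => mul_le_mul_left (pow_le_pow_left' hst.le n) _

lemma F_le_conv_green (h₀ : 0 ≤ t) (h₁ : t < 1) (h : ENNReal.ofReal t ≤ M.βc) :
    M.F t ≤ conv M.K.law (green M.K.law (ENNReal.ofReal t)) :=
  conv_mono le_rfl (G_le_green h₀ h₁ h)

lemma G_le_delta_add_conv_green (h₀ : 0 ≤ t) (h₁ : t < 1) (h : ENNReal.ofReal t ≤ M.βc) :
    M.G t ≤ delta + conv M.K.law (green M.K.law (ENNReal.ofReal t)) := by
  refine (G_le_green h₀ h₁ h).trans ((green_eq_delta_add _ _).le.trans ?_)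
  exact add_le_add_right (fun x => mul_le_of_le_one_left' (ENNReal.ofReal_le_one.mpr h₁.le)) _

lemma chi_le (h₀ : 0 ≤ t) (h₁ : t < 1) (h : ENNReal.ofReal t ≤ M.βc) :
    M.chi t ≤ ENNReal.ofReal (1 / (1 - t)) := by
  calc M.chi t ≤ ∑' x, green M.K.law (ENNReal.ofReal t) x :=
        ENNReal.tsum_le_tsum (G_le_green h₀ h₁ h)
    _ = ∑' n, ENNReal.ofReal t ^ n := by
        simp only [green]
        rw [ENNReal.tsum_comm]
        simp only [ENNReal.tsum_mul_left, tsum_convPow, M.K.tsum_law, one_pow, mul_one]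
    _ = ENNReal.ofReal (1 / (1 - t)) := by
        rw [ENNReal.tsum_geometric, one_div, ENNReal.ofReal_inv_of_pos (by linarith),
          ENNReal.ofReal_sub _ h₀, ENNReal.ofReal_one]

lemma secondMoment_G_ne_top (h₀ : 0 ≤ t) (h₁ : t < 1) (h : ENNReal.ofReal t ≤ M.βc) :
    secondMoment (M.G t) ≠ ⊤ := by
  have hsum : Summable fun n : ℕ => (n : ℝ) ^ 1 * t ^ n :=
    summable_pow_mul_geometric_of_norm_lt_one 1 (by rwa [Real.norm_of_nonneg h₀])
  refine ne_top_of_le_ne_top (ENNReal.mul_ne_top hsum.tsum_ofReal_ne_top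
    (ENNReal.ofReal_ne_top (r := M.K.sigma ^ 2))) ?_
  calc secondMoment (M.G t) ≤ secondMoment (green M.K.law (ENNReal.ofReal t)) :=
        ENNReal.tsum_le_tsum fun x => mul_le_mul_right (G_le_green h₀ h₁ h x) _
    _ = ∑' n, ENNReal.ofReal t ^ n * secondMoment (convPow M.K.law n) := by
        simp only [secondMoment, green, ← ENNReal.tsum_mul_left]
        rw [ENNReal.tsum_comm]
        simp only [mul_left_comm]
    _ = (∑' n : ℕ, ENNReal.ofReal ((n : ℝ) ^ 1 * t ^ n)) * ENNReal.ofReal (M.K.sigma ^ 2) := by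
        rw [← ENNReal.tsum_mul_right]
        refine tsum_congr fun n => ?_
        rw [secondMoment_convPow M.K.law_isSymmFun.even M.K.tsum_law, M.K.secondMoment_law,
          ENNReal.ofReal_mul (by positivity), ENNReal.ofReal_pow h₀, pow_one,
          ENNReal.ofReal_natCast]
        ring

end Model

/-! ### The integrated form of (I.2) -/

lemma hasSum_toReal_conv_conv {V : Type*} [AddCommGroup V] {g : V → ℝ≥0∞} {k : V → ℝ}
    (hk : ∀ x, 0 ≤ k x) {x : V} (h : conv g (conv (fun y => ENNReal.ofReal (k y)) g) x ≠ ⊤) :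
    HasSum (fun p : V × V => (g p.1).toReal * k p.2 * (g (x - p.1 - p.2)).toReal)
      (conv g (conv (fun y => ENNReal.ofReal (k y)) g) x).toReal := by
  rw [← tsum_prod_eq_conv_conv] at h ⊢
  simpa only [ENNReal.toReal_mul, ENNReal.toReal_ofReal (hk _)] using hasSum_toReal_tsum h

namespace Model

variable {d : ℕ} {c₀ : ℝ} {M : Model d c₀} {t b δ : ℝ}

lemma xiSq_eq (h₀ : M.chi t ≠ 0) (h : M.chi t ≠ ⊤) :
    M.xiSq t = ENNReal.ofReal (M.K.sigma ^ 2) + secondMoment (M.G t) / M.chi t := by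
  have hF : secondMoment (M.F t) =
      ENNReal.ofReal (M.K.sigma ^ 2) * M.chi t + secondMoment (M.G t) := by
    have hconv := secondMoment_conv M.K.law_isSymmFun.even (M.G t)
    rwa [M.K.secondMoment_law, M.K.tsum_law, one_mul] at hconv
  calc M.xiSq t = secondMoment (M.F t) / M.chi t := rfl
    _ = _ := by rw [hF, ENNReal.add_div, ENNReal.mul_div_cancel_right h₀ h]

lemma Subcritical.chi_ne_zero (h : M.Subcritical t) : M.chi t ≠ 0 :=
  (one_pos.trans_le (one_le_chi h.1 h.2.le)).ne'

lemma xiSq_ne_top (h₀ : M.chi t ≠ 0) (h : M.chi t ≠ ⊤) (h₂ : secondMoment (M.G t) ≠ ⊤) :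
    M.xiSq t ≠ ⊤ := by
  rw [xiSq_eq h₀ h]
  exact ENNReal.add_ne_top.mpr ⟨ENNReal.ofReal_ne_top, ENNReal.div_ne_top h₂ h₀⟩

lemma Subcritical.xiSq_ne_top (h : M.Subcritical t) : M.xiSq t ≠ ⊤ :=
  Model.xiSq_ne_top h.chi_ne_zero h.chi_ne_top h.secondMoment_G_ne_top

lemma Subcritical.xiSq_mul_le (h : M.Subcritical t) :
    (M.xiSq t).toReal * (1 - t) ≤ M.K.sigma ^ 2 := by
  have hG : secondMoment (M.G t) ≤ ENNReal.ofReal t * secondMoment (M.F t) :=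
    calc secondMoment (M.G t)
        ≤ secondMoment (delta + ENNReal.ofReal t • conv M.K.law (M.G t)) :=
          ENNReal.tsum_le_tsum fun x => mul_le_mul_right (h.G_le_delta_add x) _
      _ = secondMoment delta + ENNReal.ofReal t * secondMoment (M.F t) := by
          simp only [secondMoment, Pi.add_apply, Pi.smul_apply, smul_eq_mul, mul_add,
            ENNReal.tsum_add, mul_left_comm _ (ENNReal.ofReal t), ENNReal.tsum_mul_left]
          rfl
      _ = ENNReal.ofReal t * secondMoment (M.F t) := by rw [secondMoment_delta, zero_add]
  have hxi : M.xiSq t ≤ ENNReal.ofReal (M.K.sigma ^ 2) + ENNReal.ofReal t * M.xiSq t := by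
    nth_rw 1 [xiSq_eq h.chi_ne_zero h.chi_ne_top]
    gcongr
    rw [Model.xiSq, ← mul_div_assoc]
    exact ENNReal.div_le_div_right hG _
  have hreal := ENNReal.toReal_mono (ENNReal.add_ne_top.mpr ⟨ENNReal.ofReal_ne_top,
    ENNReal.mul_ne_top ENNReal.ofReal_ne_top h.xiSq_ne_top⟩) hxi
  rw [ENNReal.toReal_add ENNReal.ofReal_ne_top
    (ENNReal.mul_ne_top ENNReal.ofReal_ne_top h.xiSq_ne_top), ENNReal.toReal_mul,
    ENNReal.toReal_ofReal (sq_nonneg _), ENNReal.toReal_ofReal h.1] at hreal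
  linarith

lemma E_mono {s : ℝ} (hst : s ≤ t) : M.E s ≤ M.E t :=
  biSup_mono fun _ hr => ⟨hr.1, hr.2.trans hst⟩

lemma Subcritical.error_le (h : M.Subcritical t) :
    ENNReal.ofReal (∑' x, M.H t x) + ENNReal.ofReal (∑' x, sqNorm x * M.H t x) / M.xiSq t ≤
      M.E t :=
  le_iSup₂ (f := fun s (_ : s ∈ Set.Icc 0 t) => ENNReal.ofReal (∑' x, M.H s x) +
    ENNReal.ofReal (∑' x, sqNorm x * M.H s x) / M.xiSq s) t ⟨h.1, le_rfl⟩

lemma Subcritical.tsum_errorKernel_lt (h : M.Subcritical t) (hδ : 0 < δ)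
    (hE : M.E t < ENNReal.ofReal δ) : (∑' x, M.errorKernel t x).toReal < δ := by
  have hlt := (le_self_add.trans h.error_le).trans_lt hE
  rwa [h.tsum_H, ENNReal.ofReal_lt_ofReal_iff hδ] at hlt

lemma Subcritical.secondMoment_errorKernel_le (h : M.Subcritical t) (ht : t ≤ 1) (hδ : 0 ≤ δ)
    (hE : M.E t < ENNReal.ofReal δ) :
    (secondMoment (M.errorKernel t)).toReal * (1 - t) ≤ δ * M.K.sigma ^ 2 := by
  have hdiv := (le_add_self.trans h.error_le).trans hE.le
  rw [h.tsum_sqNorm_mul_H, ENNReal.ofReal_toReal h.hasExpDecay_errorKernel.secondMoment_ne_top,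
    ENNReal.div_le_iff_le_mul (.inr ENNReal.ofReal_ne_top) (.inl h.xiSq_ne_top)] at hdiv
  have hreal := ENNReal.toReal_mono
    (ENNReal.mul_ne_top ENNReal.ofReal_ne_top h.xiSq_ne_top) hdiv
  rw [ENNReal.toReal_mul, ENNReal.toReal_ofReal hδ] at hreal
  calc (secondMoment (M.errorKernel t)).toReal * (1 - t)
      ≤ δ * (M.xiSq t).toReal * (1 - t) := by gcongr
    _ ≤ δ * M.K.sigma ^ 2 := by
        rw [mul_assoc]
        gcongr
        exact h.xiSq_mul_le

variable (M) in
/-- The lower bound `G_t * (J - H_t) * G_t` of (I.2) for the derivative of `G_t`. -/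
def lowerDeriv (t : ℝ) (x : Fin d → ℤ) : ℝ :=
  (conv (M.G t) (conv M.K.law (M.G t)) x).toReal -
    (conv (M.G t) (conv (M.errorKernel t) (M.G t)) x).toReal

lemma Subcritical.tsum_conv_conv_ne_top (h : M.Subcritical t) {k : (Fin d → ℤ) → ℝ≥0∞}
    (hk : ∑' x, k x ≠ ⊤) : ∑' x, conv (M.G t) (conv k (M.G t)) x ≠ ⊤ := by
  rw [tsum_conv_conv_self]
  exact ENNReal.mul_ne_top (ENNReal.pow_ne_top h.chi_ne_top) hk

lemma Subcritical.secondMoment_conv_conv_ne_top (h : M.Subcritical t) {k : (Fin d → ℤ) → ℝ≥0∞}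
    (heven : k.Even) (hk₀ : ∑' x, k x ≠ ⊤) (hk : secondMoment k ≠ ⊤) :
    secondMoment (conv (M.G t) (conv k (M.G t))) ≠ ⊤ := by
  have h₀ : ∑' x, M.G t x ≠ ⊤ := h.chi_ne_top
  have h₂ := h.secondMoment_G_ne_top
  rw [secondMoment_conv_conv_self G_even heven]
  finiteness

lemma Subcritical.lowerDeriv_le (h : M.Subcritical t) : M.lowerDeriv t ≤ M.G' t := fun x => by
  have hfin {k : (Fin d → ℤ) → ℝ≥0∞} (hk : ∑' x, k x ≠ ⊤) :
      conv (M.G t) (conv k (M.G t)) x ≠ ⊤ :=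
    ENNReal.ne_top_of_tsum_ne_top (h.tsum_conv_conv_ne_top hk) x
  have hdiff := (hasSum_toReal_conv_conv M.K.nonneg
    (hfin (k := M.K.law) (by simp [M.K.tsum_law]))).sub
    (hasSum_toReal_conv_conv (M.H_nonneg t) (hfin h.hasExpDecay_errorKernel.tsum_ne_top))
  refine Eq.trans_le ?_ (M.I2 h.1 h.2 x)
  refine hdiff.tsum_eq.symm.trans (tsum_congr fun p => ?_)
  ring

lemma Subcritical.hasSum_lowerDeriv (h : M.Subcritical t) : HasSum (M.lowerDeriv t)
    ((M.chi t).toReal ^ 2 * (1 - (∑' x, M.errorKernel t x).toReal)) := by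
  have hlaw : ∑' x, M.K.law x ≠ ⊤ := by simp [M.K.tsum_law]
  have hdiff := (hasSum_toReal_tsum (h.tsum_conv_conv_ne_top hlaw)).sub (hasSum_toReal_tsum
    (h.tsum_conv_conv_ne_top h.hasExpDecay_errorKernel.tsum_ne_top))
  rw [tsum_conv_conv_self, tsum_conv_conv_self, M.K.tsum_law, mul_one, ENNReal.toReal_mul,
    ENNReal.toReal_pow] at hdiff
  rw [mul_one_sub]
  exact hdiff

lemma Subcritical.hasSum_sqNorm_mul_lowerDeriv (h : M.Subcritical t) :
    HasSum (fun x => sqNorm x * M.lowerDeriv t x)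
      (2 * (secondMoment (M.G t)).toReal * (M.chi t).toReal *
          (1 - (∑' x, M.errorKernel t x).toReal) +
        (M.chi t).toReal ^ 2 *
          (M.K.sigma ^ 2 - (secondMoment (M.errorKernel t)).toReal)) := by
  have htoReal {k : (Fin d → ℤ) → ℝ≥0∞} (heven : k.Even) (hk₀ : ∑' x, k x ≠ ⊤)
      (hk : secondMoment k ≠ ⊤) :
      HasSum (fun x => sqNorm x * (conv (M.G t) (conv k (M.G t)) x).toReal)
        (2 * (secondMoment (M.G t)).toReal * (M.chi t).toReal * (∑' x, k x).toReal +
          (M.chi t).toReal ^ 2 * (secondMoment k).toReal) := by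
    have h₀ : ∑' x, M.G t x ≠ ⊤ := h.chi_ne_top
    have h₂ := h.secondMoment_G_ne_top
    have hsum := hasSum_sqNorm_mul_toReal (h.secondMoment_conv_conv_ne_top heven hk₀ hk)
    rw [secondMoment_conv_conv_self G_even heven,
      ENNReal.toReal_add (by finiteness) (by finiteness)] at hsum
    simp only [ENNReal.toReal_mul, ENNReal.toReal_pow, ENNReal.toReal_ofNat] at hsum
    exact hsum
  have hlaw := htoReal M.K.law_isSymmFun.even (by simp [M.K.tsum_law])
    (M.K.secondMoment_law ▸ ENNReal.ofReal_ne_top)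
  have hH := htoReal M.errorKernel_even h.hasExpDecay_errorKernel.tsum_ne_top
    h.hasExpDecay_errorKernel.secondMoment_ne_top
  rw [M.K.tsum_law, M.K.secondMoment_law, ENNReal.toReal_one, mul_one,
    ENNReal.toReal_ofReal (sq_nonneg _)] at hlaw
  have hdiff := hlaw.sub hH
  simp only [← mul_sub] at hdiff
  rw [mul_one_sub, mul_sub, sub_add_sub_comm]
  exact hdiff

end Model

/-! ### Lower bounds for the susceptibility and the second moment -/

lemma AdmissibleKernel.sigma_pos {d : ℕ} {c₀ : ℝ} (K : AdmissibleKernel d c₀) (hc₀ : 0 < c₀) :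
    0 < K.sigma :=
  (mul_pos hc₀ K.R_pos).trans_le K.sigma_lower

lemma hasDerivAt_inv_one_sub_mul {a t : ℝ} (h : 1 - a * t ≠ 0) :
    HasDerivAt (fun s => (1 - a * s)⁻¹) (a * (1 - a * t)⁻¹ ^ 2) t := by
  refine (((hasDerivAt_id' t).const_mul a).const_sub 1).fun_inv h |>.congr_deriv ?_
  rw [mul_one, neg_neg, inv_pow, div_eq_mul_inv]

lemma hasDerivAt_mul_inv_one_sub_mul_sq {a t : ℝ} (v : ℝ) (h : 1 - a * t ≠ 0) :
    HasDerivAt (fun s => v / 2 * s * (1 - a * s)⁻¹ ^ 2)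
      (v / 2 * (1 - a * t)⁻¹ ^ 2 + v * t * a * (1 - a * t)⁻¹ ^ 3) t := by
  refine ((hasDerivAt_id' t).const_mul (v / 2)).fun_mul
    ((hasDerivAt_inv_one_sub_mul h).fun_pow 2) |>.congr_deriv ?_
  generalize (1 - a * t)⁻¹ = u
  push_cast
  ring

lemma add_mul_cube_lt {v t a u χ Y h₀ h₂ : ℝ} (hv : 0 ≤ v) (ht : 0 ≤ t) (ha : 0 ≤ a) (hu : 0 < u)
    (hχ : u ≤ χ) (hh₀ : a ≤ 1 - h₀) (hh₂ : h₂ < v / 2) (hY : Y = v / 2 * t * u ^ 2) :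
    v / 2 * u ^ 2 + v * t * a * u ^ 3 < 2 * Y * χ * (1 - h₀) + χ ^ 2 * (v - h₂) := by
  have hY₀ : 0 ≤ Y := hY ▸ by positivity
  have hχ₀ := hu.trans_le hχ
  calc v / 2 * u ^ 2 + v * t * a * u ^ 3 = u ^ 2 * (v / 2) + 2 * Y * u * a := by rw [hY]; ring
    _ ≤ χ ^ 2 * (v / 2) + 2 * Y * χ * (1 - h₀) := by gcongr
    _ < χ ^ 2 * (v - h₂) + 2 * Y * χ * (1 - h₀) := by gcongr; linarith
    _ = _ := add_comm _ _

namespace Model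

variable {d : ℕ} {c₀ : ℝ} {M : Model d c₀} {b δ : ℝ}

lemma Subcritical.monotoneOn_toReal_G (h : M.Subcritical b) (x : Fin d → ℤ) :
    MonotoneOn (fun t => (M.G t x).toReal) (Set.Icc 0 b) := fun s hs t ht hst => by
  have ht' := h.mono ht.1 ht.2
  exact ENNReal.toReal_mono (ht'.G_ne_top x) (M.mono x hs.1 hst ht'.2.le)

lemma one_sub_mul_pos {t : ℝ} (hδ : 0 ≤ δ) (ht : 0 ≤ t) (ht₁ : t < 1) : 0 < 1 - (1 - δ) * t := by
  nlinarith

theorem Subcritical.barrier_le (h : M.Subcritical b) {w : (Fin d → ℤ) → ℝ} (hw : 0 ≤ w)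
    {m ℓ B B' : ℝ → ℝ}
    (hm : ∀ t ∈ Set.Icc 0 b, HasSum (fun x => w x * (M.G t x).toReal) (m t))
    (hℓ : ∀ t ∈ Set.Icc 0 b, HasSum (fun x => w x * M.lowerDeriv t x) (ℓ t))
    (hB : ∀ t ∈ Set.Icc 0 b, HasDerivAt B (B' t) t) (hB₀ : B 0 ≤ m 0)
    (hcross : ∀ t ∈ Set.Ico 0 b, m t = B t → B' t < ℓ t) : B b ≤ m b := by
  have hsub : ∀ t ∈ Set.Icc 0 b, M.Subcritical t := fun t ht => h.mono ht.1 ht.2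
  have hb : b ∈ Set.Icc 0 b := ⟨h.1, le_rfl⟩
  rw [← (hm b hb).tsum_eq]
  refine barrier_le_tsum (g := fun t x => w x * (M.G t x).toReal)
    (g' := fun t x => w x * M.G' t x) (fun x s hs t ht hst => ?_)
    (fun t _ x => mul_nonneg (hw x) ENNReal.toReal_nonneg) (fun t ht => (hm t ht).summable)
    (fun t ht x => ?_) (fun t ht x => ?_) hℓ hB ?_ (fun t ht => ?_) hb
  · exact mul_le_mul_of_nonneg_left (h.monotoneOn_toReal_G x hs ht hst) (hw x)
  · exact (M.deriv x ht.1 (hsub t ht).2).const_mul (w x)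
  · exact mul_le_mul_of_nonneg_left ((hsub t ht).lowerDeriv_le x) (hw x)
  · rwa [(hm 0 ⟨le_rfl, h.1⟩).tsum_eq]
  · rw [(hm t (Set.Ico_subset_Icc_self ht)).tsum_eq]
    exact hcross t ht

theorem Subcritical.inv_le_toReal_chi (h : M.Subcritical b) (hb : b < 1) (hδ : 0 < δ)
    (hE : M.E b < ENNReal.ofReal δ) : (1 - (1 - δ) * b)⁻¹ ≤ (M.chi b).toReal := by
  have hsub : ∀ t ∈ Set.Icc 0 b, M.Subcritical t := fun t ht => h.mono ht.1 ht.2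
  have hpos : ∀ t ∈ Set.Icc 0 b, 0 < 1 - (1 - δ) * t :=
    fun t ht => one_sub_mul_pos hδ.le ht.1 (ht.2.trans_lt hb)
  refine h.barrier_le (w := 1) (m := fun t => (M.chi t).toReal)
    (ℓ := fun t => (M.chi t).toReal ^ 2 * (1 - (∑' x, M.errorKernel t x).toReal))
    (B := fun t => (1 - (1 - δ) * t)⁻¹) zero_le_one (fun t ht => ?_) (fun t ht => ?_)
    (fun t ht => hasDerivAt_inv_one_sub_mul (hpos t ht).ne') ?_ (fun t ht hcross => ?_)
  · simp only [Pi.one_apply, one_mul]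
    exact hasSum_toReal_tsum (hsub t ht).chi_ne_top
  · simpa only [Pi.one_apply, one_mul] using (hsub t ht).hasSum_lowerDeriv
  · rw [mul_zero, sub_zero, inv_one]
    exact (hsub 0 ⟨le_rfl, h.1⟩).one_le_toReal_chi
  · have ht := Set.Ico_subset_Icc_self ht
    have herror := (hsub t ht).tsum_errorKernel_lt hδ ((E_mono ht.2).trans_lt hE)
    have hinv := inv_pos.mpr (hpos t ht)
    rw [hcross, mul_comm]
    gcongr

lemma Subcritical.secondMoment_errorKernel_lt (h : M.Subcritical b) (hc₀ : 0 < c₀) (hδ : 0 < δ)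
    (hb : b < 1 - 2 * δ) (hE : M.E b < ENNReal.ofReal δ) :
    (secondMoment (M.errorKernel b)).toReal < M.K.sigma ^ 2 / 2 := by
  have hle := h.secondMoment_errorKernel_le (by linarith) hδ.le hE
  have hσ := pow_pos (M.K.sigma_pos hc₀) 2
  nlinarith

theorem Subcritical.le_toReal_secondMoment_G (h : M.Subcritical b) (hc₀ : 0 < c₀) (hδ : 0 < δ)
    (hb : b ≤ 1 - 2 * δ) (hE : M.E b < ENNReal.ofReal δ) :
    M.K.sigma ^ 2 / 2 * b * (1 - (1 - δ) * b)⁻¹ ^ 2 ≤ (secondMoment (M.G b)).toReal := by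
  have hsub : ∀ t ∈ Set.Icc 0 b, M.Subcritical t := fun t ht => h.mono ht.1 ht.2
  have hpos : ∀ t ∈ Set.Icc 0 b, 0 < 1 - (1 - δ) * t :=
    fun t ht => one_sub_mul_pos hδ.le ht.1 (by linarith [ht.2])
  refine h.barrier_le (m := fun t => (secondMoment (M.G t)).toReal)
    (B := fun t => M.K.sigma ^ 2 / 2 * t * (1 - (1 - δ) * t)⁻¹ ^ 2) sqNorm_nonneg
    (fun t ht => hasSum_sqNorm_mul_toReal (hsub t ht).secondMoment_G_ne_top)
    (fun t ht => (hsub t ht).hasSum_sqNorm_mul_lowerDeriv)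
    (fun t ht => hasDerivAt_mul_inv_one_sub_mul_sq _ (hpos t ht).ne') ?_ (fun t ht hcross => ?_)
  · rw [mul_zero, zero_mul]
    exact ENNReal.toReal_nonneg
  · have htb := ht.2.trans_le hb
    have ht := Set.Ico_subset_Icc_self ht
    have hEt := (E_mono ht.2).trans_lt hE
    exact add_mul_cube_lt (sq_nonneg _) ht.1 (by linarith [h.1]) (inv_pos.mpr (hpos t ht))
      ((hsub t ht).inv_le_toReal_chi (by linarith) hδ hEt)
      (by linarith [(hsub t ht).tsum_errorKernel_lt hδ hEt])
      ((hsub t ht).secondMoment_errorKernel_lt hc₀ hδ htb hEt) hcross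

end Model

/-! ### The correlation length -/

namespace Model

variable {d : ℕ} {c₀ : ℝ} {M : Model d c₀} {t β δ : ℝ}

lemma subcritical_and_E_lt_of_lt_betaOf (ht₀ : 0 ≤ t) (ht : t < M.betaOf δ) :
    M.Subcritical t ∧ M.E t < ENNReal.ofReal δ := by
  have hne : {β : ℝ | 0 ≤ β ∧ ENNReal.ofReal β < M.βc ∧ M.E β < ENNReal.ofReal δ}.Nonempty := by
    rw [Set.nonempty_iff_ne_empty]
    intro hempty
    rw [betaOf, hempty, Real.sSup_empty] at ht
    exact ht.not_ge ht₀
  obtain ⟨b, ⟨hb₀, hbc, hE⟩, htb⟩ := exists_lt_of_lt_csSup hne ht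
  exact ⟨Subcritical.mono ⟨hb₀, hbc⟩ ht₀ htb.le, (E_mono htb.le).trans_lt hE⟩

lemma ofReal_le_βc (h : β ≤ M.betaOf δ) : ENNReal.ofReal β ≤ M.βc := by
  rcases eq_or_ne M.βc ⊤ with htop | htop
  · exact htop ▸ le_top
  · rw [ENNReal.ofReal_le_iff_le_toReal htop]
    exact h.trans (Real.sSup_le (fun s hs => ((ENNReal.ofReal_lt_iff_lt_toReal hs.1 htop).mp
      hs.2.1).le) ENNReal.toReal_nonneg)

lemma sigma_sq_add_le_toReal_xiSq (h₀ : 0 ≤ β) (h₁ : β < 1) (h : ENNReal.ofReal β ≤ M.βc) :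
    M.K.sigma ^ 2 + (1 - β) * (secondMoment (M.G β)).toReal ≤ (M.xiSq β).toReal := by
  have hG := secondMoment_G_ne_top h₀ h₁ h
  have hchi := chi_le h₀ h₁ h
  have hchi₀ : M.chi β ≠ 0 := (one_pos.trans_le (one_le_chi h₀ h)).ne'
  have hchi_top : M.chi β ≠ ⊤ := ne_top_of_le_ne_top ENNReal.ofReal_ne_top hchi
  have hle : ENNReal.ofReal (M.K.sigma ^ 2) + ENNReal.ofReal (1 - β) * secondMoment (M.G β) ≤
      M.xiSq β := by
    rw [xiSq_eq hchi₀ hchi_top, mul_comm, div_eq_mul_inv]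
    gcongr
    rw [one_div, ENNReal.ofReal_inv_of_pos (sub_pos.mpr h₁)] at hchi
    exact ENNReal.le_inv_iff_le_inv.mp hchi
  have hreal := ENNReal.toReal_mono (xiSq_ne_top hchi₀ hchi_top hG) hle
  rwa [ENNReal.toReal_add ENNReal.ofReal_ne_top (ENNReal.mul_ne_top ENNReal.ofReal_ne_top hG),
    ENNReal.toReal_mul, ENNReal.toReal_ofReal (sq_nonneg _),
    ENNReal.toReal_ofReal (sub_nonneg.mpr h₁.le)] at hreal

-- Possibly `β = β(δ)`, so the lower bound is taken at `2β - 1`, where `1 - (1 - δ) t ≤ 3 (1 - β)`.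
lemma sigma_sq_le_mul_secondMoment_G (hc₀ : 0 < c₀) (hδ : 0 < δ) (hβ : 3 / 4 ≤ β)
    (hβδ : β ≤ 1 - δ) (h : β ≤ M.betaOf δ) :
    M.K.sigma ^ 2 ≤ 36 * (1 - β) ^ 2 * (secondMoment (M.G β)).toReal := by
  have hpos : 0 < 1 - β := by linarith
  obtain ⟨hsub, hE⟩ := subcritical_and_E_lt_of_lt_betaOf (M := M) (δ := δ) (t := 2 * β - 1)
    (by linarith) (by linarith)
  have hlower := hsub.le_toReal_secondMoment_G hc₀ hδ (by linarith) hE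
  have hmono : (secondMoment (M.G (2 * β - 1))).toReal ≤ (secondMoment (M.G β)).toReal :=
    ENNReal.toReal_mono (secondMoment_G_ne_top (by linarith) (by linarith) (ofReal_le_βc h))
      (ENNReal.tsum_le_tsum fun x => mul_le_mul_right
        (M.mono x hsub.1 (by linarith) (ofReal_le_βc h)) _)
  have hinv : (3 * (1 - β))⁻¹ ≤ (1 - (1 - δ) * (2 * β - 1))⁻¹ :=
    inv_anti₀ (one_sub_mul_pos hδ.le hsub.1 (by linarith)) (by nlinarith)
  calc M.K.sigma ^ 2
      = 36 * (1 - β) ^ 2 * (M.K.sigma ^ 2 / 2 * (1 / 2) * (3 * (1 - β))⁻¹ ^ 2) := by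
        field_simp
        ring
    _ ≤ 36 * (1 - β) ^ 2 *
        (M.K.sigma ^ 2 / 2 * (2 * β - 1) * (1 - (1 - δ) * (2 * β - 1))⁻¹ ^ 2) := by
        gcongr
        · exact mul_nonneg (by positivity) hsub.1
        · linarith
    _ ≤ _ := by
        gcongr
        exact hlower.trans hmono

theorem sigma_le_sqrt_mul_xi (hc₀ : 0 < c₀) (hδ : 0 < δ) (hβ : 0 ≤ β) (hβδ : β ≤ 1 - δ)
    (h : β ≤ M.betaOf δ) : M.K.sigma ≤ 6 * √(1 - β) * M.xi β := by
  have hpos : 0 < 1 - β := by linarith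
  have hxi := sigma_sq_add_le_toReal_xiSq hβ (by linarith) (ofReal_le_βc h)
  have hG : 0 ≤ (secondMoment (M.G β)).toReal := ENNReal.toReal_nonneg
  have hsq : M.K.sigma ^ 2 ≤ 36 * ((1 - β) * (M.xiSq β).toReal) := by
    have hscaled := mul_le_mul_of_nonneg_left hxi hpos.le
    rcases le_total β (3 / 4) with hβ' | hβ'
    · nlinarith [sq_nonneg M.K.sigma, mul_nonneg hpos.le hG]
    · nlinarith [sigma_sq_le_mul_secondMoment_G hc₀ hδ hβ' hβδ h, sq_nonneg M.K.sigma]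
  calc M.K.sigma ≤ √(36 * ((1 - β) * (M.xiSq β).toReal)) := Real.le_sqrt_of_sq_le hsq
    _ = 6 * √(1 - β) * M.xi β := by
        rw [Real.sqrt_mul (by norm_num), Real.sqrt_mul hpos.le, ← mul_assoc, xi,
          show (36 : ℝ) = 6 ^ 2 by norm_num, Real.sqrt_sq (by norm_num)]

end Model

/-! ### Rescaling from `R_J` and `1 - β` to `σ_J` and `ξ(β)` -/

namespace AdmissibleKernel

variable {d : ℕ} {c₀ C s a ξ : ℝ} (K : AdmissibleKernel d c₀)

lemma div_R_pow_le (hc₀ : 0 < c₀) (hC : 0 ≤ C) : C / K.R ^ d ≤ C * √d ^ d / K.sigma ^ d := by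
  have hR := K.R_pos
  have hσ := K.sigma_pos hc₀
  rw [div_le_div_iff₀ (by positivity) (by positivity), mul_assoc, ← mul_pow]
  gcongr
  exact K.sigma_le

lemma one_div_max_le (hc₀ : 0 < c₀) (hs : 0 ≤ s) :
    1 / max 1 (s / K.R) ≤ √d * c₀⁻¹ * (K.sigma / max K.sigma s) := by
  have hR := K.R_pos
  have hσ := K.sigma_pos hc₀
  have hd : 1 ≤ √(d : ℝ) := Real.one_le_sqrt.mpr (by exact_mod_cast K.dim_pos)
  have hmax : max K.sigma s ≤ √d * max K.R s := by
    rw [mul_max_of_nonneg _ _ (by positivity)]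
    exact max_le_max K.sigma_le (le_mul_of_one_le_left hs hd)
  calc 1 / max 1 (s / K.R) = K.R / max K.R s := by
        rw [← one_div_div (max K.R s), ← max_div_div_right hR.le, div_self hR.ne']
    _ ≤ c₀⁻¹ * K.sigma / (max K.sigma s / √d) :=
        div_le_div₀ (by positivity) ((le_inv_mul_iff₀ hc₀).mpr K.sigma_lower) (by positivity)
          ((div_le_iff₀' (by positivity)).mpr hmax)
    _ = √d * c₀⁻¹ * (K.sigma / max K.sigma s) := by field_simp

lemma mul_div_le_of_sigma_le (hc₀ : 0 < c₀) (hs : 0 ≤ s) (ha : 0 ≤ a)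
    (hξ : K.sigma ≤ 6 * a * ξ) : c₀ / 12 * s / ξ ≤ a * (s / K.R) / 2 := by
  have hR := K.R_pos
  have hξ₀ : 0 < ξ := pos_of_mul_pos_right ((K.sigma_pos hc₀).trans_le hξ) (by positivity)
  rw [div_le_iff₀ hξ₀]
  calc c₀ / 12 * s = c₀ * K.R * (s / (12 * K.R)) := by field_simp
    _ ≤ 6 * a * ξ * (s / (12 * K.R)) :=
        mul_le_mul_of_nonneg_right (K.sigma_lower.trans hξ) (by positivity)
    _ = a * (s / K.R) / 2 * ξ := by field_simp; ring

lemma scaled_bound_le (hd : 2 ≤ d) (hc₀ : 0 < c₀) (hC : 0 ≤ C) (hs : 0 ≤ s)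
    (ha : 0 ≤ a) (hξ : K.sigma ≤ 6 * a * ξ) :
    C / K.R ^ d * (1 / max 1 (s / K.R) ^ (d - 2)) * Real.exp (-(a * (s / K.R) / 2)) ≤
      C * √d ^ d * (√d * c₀⁻¹) ^ (d - 2) / K.sigma ^ d * (K.sigma / max K.sigma s) ^ ((d : ℝ) - 2) *
        Real.exp (-(c₀ / 12) * s / ξ) := by
  have hσ := K.sigma_pos hc₀
  have hexp := neg_le_neg (K.mul_div_le_of_sigma_le hc₀ hs ha hξ)
  calc _ ≤ C * √d ^ d / K.sigma ^ d * (√d * c₀⁻¹ * (K.sigma / max K.sigma s)) ^ (d - 2) *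
        Real.exp (-(c₀ / 12 * s / ξ)) := by
        rw [← one_div_pow, ← neg_div]
        refine mul_le_mul (mul_le_mul (K.div_R_pow_le hc₀ hC)
          (pow_le_pow_left₀ (by positivity) (K.one_div_max_le hc₀ hs) _) (by positivity)
          (by positivity)) (Real.exp_le_exp.mpr ?_) (Real.exp_nonneg _) (by positivity)
        linarith
    _ = _ := by
        rw [show (d : ℝ) - 2 = (d - 2 : ℕ) by push_cast [Nat.cast_sub hd]; rfl,
          Real.rpow_natCast, mul_pow (√d * c₀⁻¹), neg_mul, neg_div]
        ring

end AdmissibleKernel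

namespace Model

variable {d : ℕ} {c₀ : ℝ}

theorem exists_conv_green_le_xi (hd : 2 < d) (hc₀ : 0 < c₀) :
    ∃ c > (0 : ℝ), ∃ C > (0 : ℝ), ∀ (M : Model d c₀) {δ : ℝ}, 0 < δ → ∀ {β : ℝ}, 0 ≤ β →
      β ≤ 1 - δ → β ≤ M.betaOf δ → ∀ x, conv M.K.law (green M.K.law (ENNReal.ofReal β)) x ≤
        ENNReal.ofReal (C / M.sigma ^ d * (M.sigma / max M.sigma (supNorm x)) ^ ((d : ℝ) - 2) *
          Real.exp (-c * supNorm x / M.xi β)) := by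
  obtain ⟨C, hC, hgreen⟩ := exists_conv_green_law_le hd hc₀
  have : 0 < d := by omega
  refine ⟨c₀ / 12, by positivity, C * √d ^ d * (√d * c₀⁻¹) ^ (d - 2), by positivity, ?_⟩
  intro M δ hδ β hβ hβδ h x
  rw [supNorm_eq_norm]
  exact (hgreen M.K hβ (by linarith) x).trans (ENNReal.ofReal_le_ofReal
    (M.K.scaled_bound_le hd.le hc₀ hC.le (norm_nonneg x) (Real.sqrt_nonneg _)
      (sigma_le_sqrt_mul_xi hc₀ hδ hβ hβδ h)))

end Model

end Blackbox

theorem statement8_general (d : ℕ) (hd : 2 < d) (c₀ : ℝ) (hc₀ : 0 < c₀) :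
    ∃ c > (0:ℝ), ∃ C > (0:ℝ), ∀ M : Model d c₀, ∀ δ : ℝ, 0 < δ →
      ∀ β : ℝ, 0 ≤ β → β ≤ min (1 - δ) (M.betaOf δ) → ∀ x : Fin d → ℤ,
        M.G β x ≤ ENNReal.ofReal ((if x = 0 then 1 else 0) +
            C / M.sigma ^ d * (M.sigma / max M.sigma (supNorm x)) ^ ((d:ℝ) - 2) *
              Real.exp (-c * supNorm x / M.xi β)) ∧
        M.F β x ≤ ENNReal.ofReal (C / M.sigma ^ d *
            (M.sigma / max M.sigma (supNorm x)) ^ ((d:ℝ) - 2) *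
              Real.exp (-c * supNorm x / M.xi β)) := by
  obtain ⟨c, hc, C, hC, hbound⟩ := Model.exists_conv_green_le_xi hd hc₀
  refine ⟨c, hc, C, hC, fun M δ hδ β hβ hβδ x => ?_⟩
  obtain ⟨hβ₁, hβ₂⟩ := le_min_iff.mp hβδ
  have hlt : β < 1 := by linarith
  have hβc := Model.ofReal_le_βc hβ₂
  have hgreen := hbound M hδ hβ hβ₁ hβ₂ x
  have hσ : 0 < M.sigma := M.K.sigma_pos hc₀
  refine ⟨?_, (Model.F_le_conv_green hβ hlt hβc x).trans hgreen⟩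
  have hdelta : delta x = ENNReal.ofReal (if x = 0 then 1 else 0) := by
    rw [delta]
    split_ifs <;> simp
  rw [ENNReal.ofReal_add (by split_ifs <;> simp) (by positivity), ← hdelta]
  exact (Model.G_le_delta_add_conv_green hβ hlt hβc x).trans (add_le_add_right hgreen _)

/-- bounds on `G_β`, `F_β` for `β ≤ min{1-δ, β(δ)}`
(`prop:explicit bound on G for small beta`). -/
theorem statement8 (d : ℕ) (hd : 2 < d) (c₀ : ℝ) (hc₀ : c₀ ∈ Set.Ioc (0:ℝ) 1) :
    ∃ c > (0:ℝ), ∃ C > (0:ℝ), ∀ M : Model d c₀, ∀ δ : ℝ, δ ∈ Set.Ioc (0:ℝ) (1/2) →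
      ∀ β : ℝ, 0 ≤ β → β ≤ min (1 - δ) (M.betaOf δ) → ∀ x : Fin d → ℤ,
        M.G β x ≤ ENNReal.ofReal ((if x = 0 then 1 else 0) +
            C / M.sigma ^ d * (M.sigma / max M.sigma (supNorm x)) ^ ((d:ℝ) - 2) *
              Real.exp (-c * supNorm x / M.xi β)) ∧
        M.F β x ≤ ENNReal.ofReal (C / M.sigma ^ d *
            (M.sigma / max M.sigma (supNorm x)) ^ ((d:ℝ) - 2) *
              Real.exp (-c * supNorm x / M.xi β)) := by
  obtain ⟨c, hc, C, hC, hbound⟩ := statement8_general d hd c₀ hc₀.1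
  exact ⟨c, hc, C, hC, fun M δ hδ => hbound M δ hδ.1⟩
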